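/- arXiv:2411.14305 — 9 statements merged into one kernel-verified Lean document; each statement's English description precedes it below -/
import Mathlib

section
/- Under the constraint system together with the bounded-covariance assumption, the squared distance between the two empirical means satisfies ‖μ − μ*‖² ≤ 8ε/(1 − 2ε). -/
open Finset MeasureTheory
open scoped BigOperators InnerProductSpace

/-!
The two families can differ only at indices where one of the weights vanishes, a set of density at
most `2 * ε`. Put `v = μ - μs` and `f i = ⟪x i - xs i, v⟫`: this function has mean `‖v‖ ^ 2` and
vanishes off that set, so Cauchy-Schwarz bounds the square of its mean by `2 * ε` times its second
moment. Rewriting the second moment as variance plus squared mean yields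
`(1 - 2 * ε) * ‖v‖ ^ 4 ≤ 2 * ε * Var f`. The covariance bounds give `Var f ≤ 4 * ‖v‖ ^ 2`, and
cancelling `‖v‖ ^ 2` finishes.
-/

section Expect

variable {ι 𝕜 : Type*} [Fintype ι] [Field 𝕜]

theorem expect_sub_expect_sq [CharZero 𝕜] (f : ι → 𝕜) :
    𝔼 i, (f i - 𝔼 j, f j) ^ 2 = 𝔼 i, f i ^ 2 - (𝔼 i, f i) ^ 2 := by
  cases isEmpty_or_nonempty ι
  · simp
  · simp only [sub_sq, expect_add_distrib, expect_sub_distrib, ← expect_mul, ← mul_expect,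
      Fintype.expect_const]
    ring

variable [LinearOrder 𝕜] [IsStrictOrderedRing 𝕜]

theorem sq_expect_le_dens_mul_expect_sq {s : Finset ι} {f : ι → 𝕜} (hf : ∀ i ∉ s, f i = 0) :
    (𝔼 i, f i) ^ 2 ≤ s.dens * 𝔼 i, f i ^ 2 := by
  have hmul (i : ι) : (s : Set ι).indicator 1 i * f i = f i := by
    by_cases hi : i ∈ s <;> simp [hi, hf]
  have hsq (i : ι) : (s : Set ι).indicator (1 : ι → 𝕜) i ^ 2 = (s : Set ι).indicator 1 i := by
    by_cases hi : i ∈ s <;> simp [hi]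
  simpa only [hmul, hsq, expect_indicator_one] using
    expect_mul_sq_le_sq_mul_sq univ ((s : Set ι).indicator 1) f

theorem one_sub_dens_mul_sq_expect_le {s : Finset ι} {f : ι → 𝕜} (hf : ∀ i ∉ s, f i = 0) :
    (1 - s.dens) * (𝔼 i, f i) ^ 2 ≤ s.dens * 𝔼 i, (f i - 𝔼 j, f j) ^ 2 := by
  rw [expect_sub_expect_sq]
  linarith [sq_expect_le_dens_mul_expect_sq hf]

theorem dens_filter_eq_zero_le_one_sub_expect {w : ι → 𝕜} (hw : ∀ i, w i ≤ 1) :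
    (dens {i | w i = 0} : 𝕜) ≤ 1 - 𝔼 i, w i := by
  cases isEmpty_or_nonempty ι
  · simp
  · rw [← expect_indicator_one, ← Fintype.expect_one (ι := ι) (M := 𝕜),
      ← expect_sub_distrib univ (fun _ ↦ (1 : 𝕜))]
    refine expect_le_expect fun i _ ↦ ?_
    by_cases hi : w i = 0 <;> simp [hi, hw i]

end Expect

section InnerProductSpace

variable {ι E : Type*} [NormedAddCommGroup E] [InnerProductSpace ℝ E] [Module ℚ≥0 E]

theorem expect_eq_inv_card_smul_sum (s : Finset ι) (x : ι → E) :
    𝔼 i ∈ s, x i = (#s : ℝ)⁻¹ • ∑ i ∈ s, x i := by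
  rw [expect, ← NNRat.cast_smul_eq_nnqsmul ℝ, NNRat.cast_inv, NNRat.cast_natCast]

theorem expect_fin_eq_one_div_smul_sum {n : ℕ} (x : Fin n → E) :
    𝔼 i, x i = (1 / (n : ℝ)) • ∑ i, x i := by
  rw [expect_eq_inv_card_smul_sum, card_fin, one_div]

theorem expect_inner (s : Finset ι) (x : ι → E) (v : E) :
    ⟪𝔼 i ∈ s, x i, v⟫_ℝ = 𝔼 i ∈ s, ⟪x i, v⟫_ℝ := by
  simp only [expect_eq_inv_card_smul_sum, real_inner_smul_left, sum_inner, smul_eq_mul]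

variable [Fintype ι]

/-- The empirical variance of the points `x i` in direction `v`, i.e. the quadratic form of their
empirical covariance matrix at `v`; the vector `v` is not normalized. -/
noncomputable def directionalVariance (x : ι → E) (v : E) : ℝ :=
  𝔼 i, ⟪x i - 𝔼 j, x j, v⟫_ℝ ^ 2

theorem directionalVariance_sub_le (x y : ι → E) (v : E) :
    directionalVariance (x - y) v ≤ 2 * (directionalVariance x v + directionalVariance y v) := by
  simp only [directionalVariance, mul_add, mul_expect, ← expect_add_distrib]
  refine expect_le_expect fun i _ ↦ ?_
  have hsplit : (x - y) i - 𝔼 j, (x - y) j = (x i - 𝔼 j, x j) - (y i - 𝔼 j, y j) := by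
    simp only [Pi.sub_apply, expect_sub_distrib]
    abel
  rw [hsplit, inner_sub_left, ← mul_add]
  linarith [sq_nonneg (⟪x i - 𝔼 j, x j, v⟫_ℝ + ⟪y i - 𝔼 j, y j, v⟫_ℝ)]

theorem one_sub_dens_mul_sq_inner_expect_le {s : Finset ι} {x : ι → E} (hx : ∀ i ∉ s, x i = 0)
    (v : E) :
    (1 - s.dens) * ⟪𝔼 i, x i, v⟫_ℝ ^ 2 ≤ s.dens * directionalVariance x v := by
  have hinner : ∀ i ∉ s, ⟪x i, v⟫_ℝ = 0 := fun i hi ↦ by rw [hx i hi, inner_zero_left]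
  simpa only [directionalVariance, inner_sub_left, expect_inner] using
    one_sub_dens_mul_sq_expect_le hinner

theorem one_sub_dens_mul_sq_norm_expect_sub_expect_le {s : Finset ι} {x y : ι → E} {σ : ℝ}
    (hxy : ∀ i ∉ s, x i = y i)
    (hx : directionalVariance x (𝔼 i, x i - 𝔼 i, y i) ≤ σ ^ 2 * ‖𝔼 i, x i - 𝔼 i, y i‖ ^ 2)
    (hy : directionalVariance y (𝔼 i, x i - 𝔼 i, y i) ≤ σ ^ 2 * ‖𝔼 i, x i - 𝔼 i, y i‖ ^ 2) :
    (1 - s.dens) * ‖𝔼 i, x i - 𝔼 i, y i‖ ^ 2 ≤ 4 * σ ^ 2 * s.dens := by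
  set v := 𝔼 i, x i - 𝔼 i, y i with hv
  rcases (sq_nonneg ‖v‖).eq_or_lt with hzero | hpos
  · rw [← hzero, mul_zero]
    positivity
  have hmean : ⟪𝔼 i, (x - y) i, v⟫_ℝ = ‖v‖ ^ 2 := by
    simp only [Pi.sub_apply, expect_sub_distrib, ← hv, real_inner_self_eq_norm_sq]
  have hvar : directionalVariance (x - y) v ≤ 4 * σ ^ 2 * ‖v‖ ^ 2 := by
    linarith [directionalVariance_sub_le x y v]
  refine le_of_mul_le_mul_right ?_ hpos
  calc (1 - s.dens) * ‖v‖ ^ 2 * ‖v‖ ^ 2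
      = (1 - s.dens) * ⟪𝔼 i, (x - y) i, v⟫_ℝ ^ 2 := by rw [hmean]; ring
    _ ≤ s.dens * directionalVariance (x - y) v :=
      one_sub_dens_mul_sq_inner_expect_le (fun i hi ↦ sub_eq_zero.2 (hxy i hi)) v
    _ ≤ s.dens * (4 * σ ^ 2 * ‖v‖ ^ 2) := by gcongr
    _ = 4 * σ ^ 2 * s.dens * ‖v‖ ^ 2 := by ring

theorem bounded_covariance_identifiability_general {ε σ : ℝ} (hε : ε < 1 / 2)
    {z x xs : ι → E} {w ws : ι → ℝ} (hw : ∀ i, w i ≤ 1) (hwz : ∀ i, w i • (z i - x i) = 0)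
    (hws : ∀ i, ws i ≤ 1) (hwsz : ∀ i, ws i • (z i - xs i) = 0)
    (hwmean : 1 - ε ≤ 𝔼 i, w i) (hwsmean : 1 - ε ≤ 𝔼 i, ws i)
    (hvar : directionalVariance x (𝔼 i, x i - 𝔼 i, xs i) ≤
      σ ^ 2 * ‖𝔼 i, x i - 𝔼 i, xs i‖ ^ 2)
    (hvars : directionalVariance xs (𝔼 i, x i - 𝔼 i, xs i) ≤
      σ ^ 2 * ‖𝔼 i, x i - 𝔼 i, xs i‖ ^ 2) :
    ‖𝔼 i, x i - 𝔼 i, xs i‖ ^ 2 ≤ 8 * σ ^ 2 * ε / (1 - 2 * ε) := by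
  classical
  let s : Finset ι := ({i | w i = 0} : Finset ι) ∪ ({i | ws i = 0} : Finset ι)
  have hagree : ∀ i ∉ s, x i = xs i := by
    intro i hi
    simp only [s, mem_union, mem_filter_univ, not_or] at hi
    have hzx : z i = x i := sub_eq_zero.1 ((smul_eq_zero_iff_right hi.1).1 (hwz i))
    have hzxs : z i = xs i := sub_eq_zero.1 ((smul_eq_zero_iff_right hi.2).1 (hwsz i))
    exact hzx.symm.trans hzxs
  have hdens : (s.dens : ℝ) ≤ 2 * ε := by
    have hunion : (s.dens : ℝ) ≤ dens {i | w i = 0} + dens {i | ws i = 0} :=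
      mod_cast dens_union_le _ _
    linarith [dens_filter_eq_zero_le_one_sub_expect hw, dens_filter_eq_zero_le_one_sub_expect hws]
  rw [le_div_iff₀' (by linarith)]
  calc (1 - 2 * ε) * ‖𝔼 i, x i - 𝔼 i, xs i‖ ^ 2
      ≤ (1 - s.dens) * ‖𝔼 i, x i - 𝔼 i, xs i‖ ^ 2 := by gcongr
    _ ≤ 4 * σ ^ 2 * s.dens := one_sub_dens_mul_sq_norm_expect_sub_expect_le hagree hvar hvars
    _ ≤ 4 * σ ^ 2 * (2 * ε) := by gcongr
    _ = 8 * σ ^ 2 * ε := by ring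

end InnerProductSpace

theorem le_one_of_sq_eq_self {R : Type*} [Ring R] [LinearOrder R] [IsStrictOrderedRing R] {w : R}
    (hw : w ^ 2 = w) : w ≤ 1 :=
  (eq_zero_or_one_of_sq_eq_self hw).elim (fun h ↦ h.trans_le zero_le_one) le_of_eq

/-- Deterministic core of Theorem 1.1: under the SoS constraint system with the
bounded-covariance assumption, `‖μ − μ*‖² ≤ 8ε/(1 − 2ε)`. -/
theorem bounded_covariance_identifiability
    (n d : ℕ) (hn : 1 ≤ n) (hd : 1 ≤ d)
    (ε : ℝ) (hε0 : 0 ≤ ε) (hε : ε < 1 / 2)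
    (z x xs : Fin n → EuclideanSpace ℝ (Fin d)) (w ws : Fin n → ℝ)
    (hw : ∀ i, w i ^ 2 = w i)
    (hwz : ∀ i, w i • (z i - x i) = 0)
    (hws : ∀ i, ws i ^ 2 = ws i)
    (hwsz : ∀ i, ws i • (z i - xs i) = 0)
    (hwsum : 1 - ε ≤ (1 / (n : ℝ)) * ∑ i, w i)
    (hwssum : 1 - ε ≤ (1 / (n : ℝ)) * ∑ i, ws i)
    (μ μs : EuclideanSpace ℝ (Fin d))
    (hμ : μ = (1 / (n : ℝ)) • ∑ i, x i)
    (hμs : μs = (1 / (n : ℝ)) • ∑ i, xs i)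
    (hcov : ∀ v : EuclideanSpace ℝ (Fin d),
      (1 / (n : ℝ)) * ∑ i, ⟪x i - μ, v⟫_ℝ ^ 2 ≤ ‖v‖ ^ 2)
    (hcovs : ∀ v : EuclideanSpace ℝ (Fin d),
      (1 / (n : ℝ)) * ∑ i, ⟪xs i - μs, v⟫_ℝ ^ 2 ≤ ‖v‖ ^ 2) :
    ‖μ - μs‖ ^ 2 ≤ 8 * ε / (1 - 2 * ε) := by
  simp only [← smul_eq_mul (1 / (n : ℝ)), ← expect_fin_eq_one_div_smul_sum]
    at hwsum hwssum hμ hμs hcov hcovs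
  subst hμ hμs
  simpa using bounded_covariance_identifiability_general (σ := 1) hε
    (fun i ↦ le_one_of_sq_eq_self (hw i)) hwz (fun i ↦ le_one_of_sq_eq_self (hws i)) hwsz
    hwsum hwssum (by simpa [directionalVariance] using hcov _)
    (by simpa [directionalVariance] using hcovs _)
end

section
/- Under the constraint system together with the bounded k-th moment assumption, with δ = 1 − 2ε, the squared distance between the two empirical means satisfies ‖μ − μ*‖² ≤ 4k/δ^{2/k}; equivalently, ‖μ − μ*‖^k ≤ 2^k · k^{k/2} / δ. -/
open Finset MeasureTheory
open scoped BigOperators InnerProductSpace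

/-!
Wherever both weights are nonzero the two families agree with `z`, hence with each other. There
`a - b = (x - b) - (x - a)`, so the even power `⟪a - b, v⟫ ^ k` is bounded by the deviations of the
families from `a` and `b`; elsewhere `w + w' - 1 ≤ 0`. Averaging, with `M = B ^ (k / 2)`, gives
`(1 - 2ε) ⟪a - b, v⟫ ^ k ≤ 2 ^ k M ‖v‖ ^ k`. At `v = a - b` the left side is
`(1 - 2ε) ‖v‖ ^ (2k)`, and one factor `‖v‖ ^ k` cancels.
-/

lemma one_div_mul_sum_eq_expect {K : Type*} [Semifield K] [CharZero K] {n : ℕ} (f : Fin n → K) :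
    1 / (n : K) * ∑ i, f i = 𝔼 i, f i := by
  rw [Fintype.expect_eq_sum_div_card, Fintype.card_fin, one_div_mul_eq_div]

lemma le_one_of_sq_eq_self_s1 {R : Type*} [CommRing R] [LinearOrder R] [IsStrictOrderedRing R]
    {t : R} (ht : t ^ 2 = t) : t ≤ 1 := by
  linarith [sq_nonneg (t - 1)]

section InnerProductSpace

variable {ι E : Type*} [NormedAddCommGroup E] [InnerProductSpace ℝ E] {k : ℕ}

lemma inner_sub_pow_le (hk : Even k) (x a b v : E) :
    ⟪a - b, v⟫_ℝ ^ k ≤ 2 ^ (k - 1) * (⟪x - a, v⟫_ℝ ^ k + ⟪x - b, v⟫_ℝ ^ k) := by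
  have hsplit : ⟪a - b, v⟫_ℝ = -⟪x - a, v⟫_ℝ + ⟪x - b, v⟫_ℝ := by
    rw [← inner_neg_left, ← inner_add_left]
    congr 1
    abel
  calc ⟪a - b, v⟫_ℝ ^ k = (-⟪x - a, v⟫_ℝ + ⟪x - b, v⟫_ℝ) ^ k := by rw [hsplit]
    _ ≤ 2 ^ (k - 1) * ((-⟪x - a, v⟫_ℝ) ^ k + ⟪x - b, v⟫_ℝ ^ k) := hk.add_pow_le
    _ = 2 ^ (k - 1) * (⟪x - a, v⟫_ℝ ^ k + ⟪x - b, v⟫_ℝ ^ k) := by rw [hk.neg_pow]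

lemma overlap_mul_inner_sub_pow_le (hk : Even k) {w w' : ℝ} (hw : w ≤ 1) (hw' : w' ≤ 1)
    {z x y : E} (hwz : w • (z - x) = 0) (hwz' : w' • (z - y) = 0) (a b v : E) :
    (w + w' - 1) * ⟪a - b, v⟫_ℝ ^ k ≤
      2 ^ (k - 1) * (⟪x - a, v⟫_ℝ ^ k + ⟪y - b, v⟫_ℝ ^ k) := by
  have hpow (u : E) : 0 ≤ ⟪u, v⟫_ℝ ^ k := hk.pow_nonneg _
  have hmoments : 0 ≤ 2 ^ (k - 1) * (⟪x - a, v⟫_ℝ ^ k + ⟪y - b, v⟫_ℝ ^ k) :=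
    mul_nonneg (by positivity) (add_nonneg (hpow _) (hpow _))
  rcases smul_eq_zero.mp hwz with rfl | hzx
  · exact (mul_nonpos_of_nonpos_of_nonneg (by linarith) (hpow _)).trans hmoments
  rcases smul_eq_zero.mp hwz' with rfl | hzy
  · exact (mul_nonpos_of_nonpos_of_nonneg (by linarith) (hpow _)).trans hmoments
  obtain rfl : x = y := (sub_eq_zero.mp hzx).symm.trans (sub_eq_zero.mp hzy)
  exact (mul_le_of_le_one_left (hpow _) (by linarith)).trans (inner_sub_pow_le hk x a b v)

lemma expect_overlap_mul_inner_sub_pow_le [Fintype ι] [Nonempty ι] (hk : Even k)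
    {w w' : ι → ℝ} (hw : ∀ i, w i ≤ 1) (hw' : ∀ i, w' i ≤ 1) {z x y : ι → E}
    (hwz : ∀ i, w i • (z i - x i) = 0) (hwz' : ∀ i, w' i • (z i - y i) = 0) (a b v : E) :
    (𝔼 i, w i + 𝔼 i, w' i - 1) * ⟪a - b, v⟫_ℝ ^ k ≤
      2 ^ (k - 1) * (𝔼 i, ⟪x i - a, v⟫_ℝ ^ k + 𝔼 i, ⟪y i - b, v⟫_ℝ ^ k) :=
  calc (𝔼 i, w i + 𝔼 i, w' i - 1) * ⟪a - b, v⟫_ℝ ^ k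
      = 𝔼 i, (w i + w' i - 1) * ⟪a - b, v⟫_ℝ ^ k := by
        rw [← expect_mul, expect_sub_distrib, expect_add_distrib, Fintype.expect_const]
    _ ≤ 𝔼 i, 2 ^ (k - 1) * (⟪x i - a, v⟫_ℝ ^ k + ⟪y i - b, v⟫_ℝ ^ k) :=
        expect_le_expect fun i _ ↦
          overlap_mul_inner_sub_pow_le hk (hw i) (hw' i) (hwz i) (hwz' i) a b v
    _ = 2 ^ (k - 1) * (𝔼 i, ⟪x i - a, v⟫_ℝ ^ k + 𝔼 i, ⟪y i - b, v⟫_ℝ ^ k) := by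
        rw [← mul_expect, expect_add_distrib]

lemma mul_norm_pow_le_of_mul_inner_self_pow_le (hk : k ≠ 0) {δ C : ℝ} (hC : 0 ≤ C) {u : E}
    (h : δ * ⟪u, u⟫_ℝ ^ k ≤ C * ‖u‖ ^ k) : δ * ‖u‖ ^ k ≤ C := by
  rcases eq_or_ne u 0 with rfl | hu
  · simpa [hk] using hC
  · rw [real_inner_self_eq_norm_mul_norm, mul_pow, ← mul_assoc] at h
    exact le_of_mul_le_mul_right h (pow_pos (norm_pos_iff.mpr hu) k)

end InnerProductSpace

lemma sq_le_div_rpow_of_pow_le {k : ℕ} (hk : k ≠ 0) {t c B δ : ℝ} (ht : 0 ≤ t) (hc : 0 ≤ c)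
    (hB : 0 ≤ B) (hδ : 0 ≤ δ) (h : t ^ k ≤ c ^ k * B ^ ((k : ℝ) / 2) / δ) :
    t ^ 2 ≤ c ^ 2 * B / δ ^ ((2 : ℝ) / k) := by
  have hk' : (k : ℝ) ≠ 0 := Nat.cast_ne_zero.mpr hk
  have pow_root {s : ℝ} (hs : 0 ≤ s) : (s ^ k) ^ ((2 : ℝ) / k) = s ^ 2 := by
    rw [← Real.rpow_natCast_mul hs, mul_div_cancel₀ _ hk', Real.rpow_two]
  have rpow_root : (B ^ ((k : ℝ) / 2)) ^ ((2 : ℝ) / k) = B := by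
    rw [← Real.rpow_mul hB, div_mul_div_cancel₀' hk', div_self two_ne_zero, Real.rpow_one]
  calc t ^ 2 = (t ^ k) ^ ((2 : ℝ) / k) := (pow_root ht).symm
    _ ≤ (c ^ k * B ^ ((k : ℝ) / 2) / δ) ^ ((2 : ℝ) / k) := by gcongr
    _ = c ^ 2 * B / δ ^ ((2 : ℝ) / k) := by
      rw [Real.div_rpow (by positivity) hδ, Real.mul_rpow (by positivity) (by positivity),
        pow_root hc, rpow_root]

theorem bounded_kth_moment_identifiability_general {ι E : Type*} [Fintype ι]
    [NormedAddCommGroup E] [InnerProductSpace ℝ E] {k : ℕ} (hk : Even k) (hk0 : k ≠ 0)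
    {ε B : ℝ} (hε : ε < 1 / 2) (hB : 0 ≤ B) {z x y : ι → E} {w w' : ι → ℝ}
    (hw : ∀ i, w i ≤ 1) (hwz : ∀ i, w i • (z i - x i) = 0)
    (hw' : ∀ i, w' i ≤ 1) (hwz' : ∀ i, w' i • (z i - y i) = 0)
    (hwε : 1 - ε ≤ 𝔼 i, w i) (hwε' : 1 - ε ≤ 𝔼 i, w' i) {a b : E}
    (hx : 𝔼 i, ⟪x i - a, a - b⟫_ℝ ^ k ≤ B ^ ((k : ℝ) / 2) * ‖a - b‖ ^ k)
    (hy : 𝔼 i, ⟪y i - b, a - b⟫_ℝ ^ k ≤ B ^ ((k : ℝ) / 2) * ‖a - b‖ ^ k) :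
    ‖a - b‖ ^ 2 ≤ 4 * B / (1 - 2 * ε) ^ ((2 : ℝ) / k) ∧
      ‖a - b‖ ^ k ≤ 2 ^ k * B ^ ((k : ℝ) / 2) / (1 - 2 * ε) := by
  have hδ : 0 < 1 - 2 * ε := by linarith
  have : Nonempty ι := by
    by_contra! hι
    rw [univ_eq_empty, expect_empty] at hwε
    linarith
  have hmoments : (1 - 2 * ε) * ⟪a - b, a - b⟫_ℝ ^ k ≤
      2 ^ k * B ^ ((k : ℝ) / 2) * ‖a - b‖ ^ k :=
    calc (1 - 2 * ε) * ⟪a - b, a - b⟫_ℝ ^ k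
        ≤ (𝔼 i, w i + 𝔼 i, w' i - 1) * ⟪a - b, a - b⟫_ℝ ^ k :=
          mul_le_mul_of_nonneg_right (by linarith) (hk.pow_nonneg _)
      _ ≤ 2 ^ (k - 1) * (𝔼 i, ⟪x i - a, a - b⟫_ℝ ^ k + 𝔼 i, ⟪y i - b, a - b⟫_ℝ ^ k) :=
          expect_overlap_mul_inner_sub_pow_le hk hw hw' hwz hwz' a b (a - b)
      _ ≤ 2 ^ (k - 1) * (B ^ ((k : ℝ) / 2) * ‖a - b‖ ^ k + B ^ ((k : ℝ) / 2) * ‖a - b‖ ^ k) := by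
          gcongr
      _ = 2 ^ k * B ^ ((k : ℝ) / 2) * ‖a - b‖ ^ k := by
          rw [← pow_sub_one_mul hk0 (2 : ℝ)]
          ring
  have hpow : ‖a - b‖ ^ k ≤ 2 ^ k * B ^ ((k : ℝ) / 2) / (1 - 2 * ε) :=
    (le_div_iff₀' hδ).mpr (mul_norm_pow_le_of_mul_inner_self_pow_le hk0 (by positivity) hmoments)
  refine ⟨?_, hpow⟩
  have hsq := sq_le_div_rpow_of_pow_le hk0 (norm_nonneg _) zero_le_two hB hδ.le hpow
  rwa [show (2 : ℝ) ^ 2 = 4 by norm_num] at hsq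

/-- Deterministic core of Theorem 1.4: under the SoS constraint system with certifiably
bounded `k`-th moments, with `δ = 1 − 2ε`, one has `‖μ − μ*‖² ≤ 4k/δ^(2/k)`, equivalently
`‖μ − μ*‖^k ≤ 2^k · k^(k/2) / δ`. -/
theorem bounded_kth_moment_identifiability
    (n d k : ℕ) (hn : 1 ≤ n) (hd : 1 ≤ d) (hk : 2 ≤ k) (hkpow : ∃ m : ℕ, k = 2 ^ m)
    (ε : ℝ) (hε0 : 0 ≤ ε) (hε : ε < 1 / 2)
(z x xs : Fin n → EuclideanSpace ℝ (Fin d)) (w ws : Fin n → ℝ)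
    (hw : ∀ i, w i ^ 2 = w i)
    (hwz : ∀ i, w i • (z i - x i) = 0)
    (hws : ∀ i, ws i ^ 2 = ws i)
    (hwsz : ∀ i, ws i • (z i - xs i) = 0)
    (hwsum : 1 - ε ≤ (1 / (n : ℝ)) * ∑ i, w i)
    (hwssum : 1 - ε ≤ (1 / (n : ℝ)) * ∑ i, ws i)
    (μ μs : EuclideanSpace ℝ (Fin d))
    (hμ : μ = (1 / (n : ℝ)) • ∑ i, x i)
    (hμs : μs = (1 / (n : ℝ)) • ∑ i, xs i)
    (hmom : ∀ v : EuclideanSpace ℝ (Fin d),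
      (1 / (n : ℝ)) * ∑ i, ⟪x i - μ, v⟫_ℝ ^ k ≤ (k : ℝ) ^ ((k : ℝ) / 2) * ‖v‖ ^ k)
    (hmoms : ∀ v : EuclideanSpace ℝ (Fin d),
      (1 / (n : ℝ)) * ∑ i, ⟪xs i - μs, v⟫_ℝ ^ k ≤ (k : ℝ) ^ ((k : ℝ) / 2) * ‖v‖ ^ k) :
    ‖μ - μs‖ ^ 2 ≤ 4 * (k : ℝ) / (1 - 2 * ε) ^ ((2 : ℝ) / k) ∧
      ‖μ - μs‖ ^ k ≤ 2 ^ k * (k : ℝ) ^ ((k : ℝ) / 2) / (1 - 2 * ε) := by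
  have hkeven : Even k := by
    obtain ⟨m, rfl⟩ := hkpow
    exact even_two.pow_of_ne_zero (by rintro rfl; norm_num at hk)
  simp only [one_div_mul_sum_eq_expect] at hwsum hwssum hmom hmoms
  exact bounded_kth_moment_identifiability_general hkeven (by omega) hε k.cast_nonneg
    (fun i ↦ le_one_of_sq_eq_self_s1 (hw i)) hwz
    (fun i ↦ le_one_of_sq_eq_self_s1 (hws i)) hwsz hwsum hwssum (hmom _) (hmoms _)
end

section
/- Let D1 and D2 be Borel probability distributions on ℝ^d with finite means μ1 and μ2 respectively, each having bounded k-th moments: for every v ∈ ℝ^d and j ∈ {1,2}, E_{X∼Dj}[⟨X − μj, v⟩^k] ≤ k^{k/2}·‖v‖^k. Suppose d_TV(D1, D2) ≤ 1 − δ for some δ ∈ (0, 1]. Then ‖μ1 − μ2‖ ≤ 2·√k / δ^{1/k}. -/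
open Finset MeasureTheory
open scoped BigOperators InnerProductSpace

/-- The total variation distance between two measures:
`d_TV(P,Q) = sup_A |P(A) − Q(A)|` over measurable sets `A`. -/
noncomputable def tvDist {α : Type*} [MeasurableSpace α]
    (P Q : MeasureTheory.Measure α) : ℝ :=
  ⨆ A : {s : Set α // MeasurableSet s}, |(P A.1).toReal - (Q A.1).toReal|

/-!
The infimum `P ⊓ Q` of two probability measures has mass at least `1 - tvDist P Q`, hence at
least `δ`. In `L^p (P ⊓ Q)` the constant `a - b` is the difference of `f - b` and `f - a`, so by
Minkowski's inequality its norm, which is at least `‖a - b‖ δ^(1/p)`, is at most the sum of the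
norms of `f - a` and `f - b`; these only grow on passing to `L^p (P)` and `L^p (Q)`. For
vector-valued means, take for `f` a functional of norm at most one that attains the norm of the
difference of the means.
-/

open scoped ENNReal NNReal

section Overlap

variable {α : Type*} [MeasurableSpace α] (P Q : Measure α)

lemma abs_measureReal_sub_le_tvDist [IsProbabilityMeasure P] [IsProbabilityMeasure Q] {s : Set α}
    (hs : MeasurableSet s) : |P.real s - Q.real s| ≤ tvDist P Q := by
  refine le_ciSup (f := fun A : {s : Set α // MeasurableSet s} ↦ |P.real A - Q.real A|)
    ⟨1, ?_⟩ ⟨s, hs⟩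
  rintro _ ⟨A, rfl⟩
  exact abs_sub_le_of_nonneg_of_le measureReal_nonneg measureReal_le_one
    measureReal_nonneg measureReal_le_one

lemma ofReal_one_sub_tvDist_le_inf_univ [IsProbabilityMeasure P] [IsProbabilityMeasure Q] :
    ENNReal.ofReal (1 - tvDist P Q) ≤ (P ⊓ Q) Set.univ := by
  rw [Measure.inf_apply .univ]
  refine le_sInf ?_
  -- The infimum runs over all `t`, measurable or not, whereas `tvDist` only sees measurable sets.
  rintro _ ⟨t, rfl⟩
  set u := toMeasurable P t
  have hu : MeasurableSet u := measurableSet_toMeasurable P t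
  have hreal : 1 - tvDist P Q ≤ P.real u + Q.real uᶜ := by
    rw [probReal_compl_eq_one_sub hu]
    linarith [neg_le_of_abs_le (abs_measureReal_sub_le_tvDist P Q hu)]
  calc ENNReal.ofReal (1 - tvDist P Q)
      ≤ ENNReal.ofReal (P.real u + Q.real uᶜ) := ENNReal.ofReal_le_ofReal hreal
    _ = P u + Q uᶜ := by
        rw [ENNReal.ofReal_add measureReal_nonneg measureReal_nonneg, ofReal_measureReal,
          ofReal_measureReal]
    _ ≤ P t + Q tᶜ := by
        gcongr ?_ + Q ?_
        · exact (measure_toMeasurable t).le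
        · exact Set.compl_subset_compl.2 (subset_toMeasurable P t)
    _ = P (t ∩ Set.univ) + Q (tᶜ ∩ Set.univ) := by simp only [Set.inter_univ]

variable {P Q} in
lemma enorm_sub_mul_inf_univ_rpow_le {F : Type*} [NormedAddCommGroup F] {p : ℝ≥0∞} (hp : 1 ≤ p)
    (hPQ : P ⊓ Q ≠ 0) {f : α → F} (hf : AEStronglyMeasurable f (P ⊓ Q)) (a b : F) :
    ‖a - b‖ₑ * (P ⊓ Q) Set.univ ^ (1 / p.toReal) ≤
      eLpNorm (fun x ↦ f x - a) p P + eLpNorm (fun x ↦ f x - b) p Q := by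
  calc ‖a - b‖ₑ * (P ⊓ Q) Set.univ ^ (1 / p.toReal)
      = eLpNorm (fun _ ↦ a - b) p (P ⊓ Q) :=
        (eLpNorm_const (a - b) (zero_lt_one.trans_le hp).ne' hPQ).symm
    _ = eLpNorm ((fun x ↦ f x - b) - fun x ↦ f x - a) p (P ⊓ Q) := by
        congr 1 with x
        simp only [Pi.sub_apply, sub_sub_sub_cancel_left]
    _ ≤ eLpNorm (fun x ↦ f x - b) p (P ⊓ Q) + eLpNorm (fun x ↦ f x - a) p (P ⊓ Q) :=
        eLpNorm_sub_le (hf.sub aestronglyMeasurable_const) (hf.sub aestronglyMeasurable_const) hp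
    _ ≤ eLpNorm (fun x ↦ f x - b) p Q + eLpNorm (fun x ↦ f x - a) p P :=
        add_le_add (eLpNorm_mono_measure _ inf_le_right) (eLpNorm_mono_measure _ inf_le_left)
    _ = _ := add_comm _ _

end Overlap

section Moments

variable {k : ℕ}

lemma eLpNorm_le_of_integral_pow_le {α : Type*} [MeasurableSpace α] {μ : Measure α} {f : α → ℝ}
    (hk : k ≠ 0) (hkeven : Even k) (hf : Integrable (fun x ↦ f x ^ k) μ) {c : ℝ≥0}
    (hc : ∫ x, f x ^ k ∂μ ≤ c ^ k) : eLpNorm f k μ ≤ c := by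
  have hpow : eLpNorm f k μ ^ k = ENNReal.ofReal (∫ x, f x ^ k ∂μ) := by
    have h := eLpNorm_nnreal_pow_eq_lintegral (f := f) (μ := μ) (p := k) (mod_cast hk)
    simp only [ENNReal.coe_natCast, NNReal.coe_natCast, ENNReal.rpow_natCast] at h
    rw [h, ofReal_integral_eq_lintegral_ofReal hf (ae_of_all _ fun x ↦ hkeven.pow_nonneg (f x))]
    refine lintegral_congr fun x ↦ ?_
    rw [← enorm_pow, Real.enorm_of_nonneg (hkeven.pow_nonneg _)]
  refine (ENNReal.pow_le_pow_left_iff hk).1 ?_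
  calc eLpNorm f k μ ^ k = ENNReal.ofReal (∫ x, f x ^ k ∂μ) := hpow
    _ ≤ ENNReal.ofReal (c ^ k) := ENNReal.ofReal_le_ofReal hc
    _ = (c : ℝ≥0∞) ^ k := by rw [ENNReal.ofReal_pow c.coe_nonneg, ENNReal.ofReal_coe_nnreal]

lemma rpow_half_mul_pow_eq_sqrt_mul_pow {c : ℝ} (hc : 0 ≤ c) (r : ℝ) :
    c ^ ((k : ℝ) / 2) * r ^ k = (√c * r) ^ k := by
  rw [mul_pow, Real.sqrt_eq_rpow, ← Real.rpow_mul_natCast hc, one_div_mul_eq_div]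

lemma eLpNorm_dual_sub_le_of_inner_moment_le {H : Type*} [NormedAddCommGroup H]
    [InnerProductSpace ℝ H] [CompleteSpace H] [MeasurableSpace H] {P : Measure H} {a : H}
    (hk : k ≠ 0) (hkeven : Even k) {c : ℝ≥0}
    (hint : ∀ v, Integrable (fun x ↦ ⟪x - a, v⟫_ℝ ^ k) P)
    (hmom : ∀ v, ∫ x, ⟪x - a, v⟫_ℝ ^ k ∂P ≤ (c : ℝ) ^ ((k : ℝ) / 2) * ‖v‖ ^ k)
    (g : StrongDual ℝ H) :
    eLpNorm (fun x ↦ g x - g a) k P ≤ NNReal.sqrt c * ‖g‖ₑ := by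
  obtain ⟨v, rfl⟩ := (InnerProductSpace.toDual ℝ H).surjective g
  have hinner (x : H) : InnerProductSpace.toDual ℝ H v x - InnerProductSpace.toDual ℝ H v a =
      ⟪x - a, v⟫_ℝ := by
    rw [← map_sub, InnerProductSpace.toDual_apply_apply, real_inner_comm]
  simp only [hinner, LinearIsometryEquiv.enorm_map]
  refine eLpNorm_le_of_integral_pow_le (c := NNReal.sqrt c * ‖v‖₊) hk hkeven (hint v) ?_
  simpa [rpow_half_mul_pow_eq_sqrt_mul_pow c.coe_nonneg] using hmom v

end Moments

-- At `p = ∞` the convention `1 / p.toReal = 0` gives the intended exponent `1 / p`.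
theorem identifiability_large_corruption_general {E : Type*} [SeminormedAddCommGroup E]
    [NormedSpace ℝ E] [MeasurableSpace E] [OpensMeasurableSpace E] {P Q : Measure E}
    [IsProbabilityMeasure P] [IsProbabilityMeasure Q] {p : ℝ≥0∞} (hp : 1 ≤ p) {a b : E} {σ : ℝ≥0}
    (hP : ∀ g : StrongDual ℝ E, eLpNorm (fun x ↦ g x - g a) p P ≤ σ * ‖g‖ₑ)
    (hQ : ∀ g : StrongDual ℝ E, eLpNorm (fun x ↦ g x - g b) p Q ≤ σ * ‖g‖ₑ)
    {δ : ℝ} (hδ : 0 < δ) (htv : tvDist P Q ≤ 1 - δ) :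
    ‖a - b‖ ≤ 2 * σ / δ ^ (1 / p.toReal) := by
  have hoverlap : ENNReal.ofReal δ ≤ (P ⊓ Q) Set.univ :=
    (ENNReal.ofReal_le_ofReal (by linarith)).trans (ofReal_one_sub_tvDist_le_inf_univ P Q)
  have hPQ : P ⊓ Q ≠ 0 :=
    Measure.measure_univ_pos.1 ((ENNReal.ofReal_pos.2 hδ).trans_le hoverlap)
  obtain ⟨g, hg_norm, hg⟩ := exists_dual_vector'' ℝ (a - b)
  have hg_enorm : ‖g‖ₑ ≤ 1 := by
    rw [← ofReal_norm]
    exact ENNReal.ofReal_le_one.2 hg_norm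
  have hmain : ‖a - b‖ₑ * ENNReal.ofReal δ ^ (1 / p.toReal) ≤ 2 * σ :=
    calc ‖a - b‖ₑ * ENNReal.ofReal δ ^ (1 / p.toReal)
        ≤ ‖g a - g b‖ₑ * (P ⊓ Q) Set.univ ^ (1 / p.toReal) := by
          rw [← map_sub, hg]
          simp only [RCLike.ofReal_real_eq_id, id, enorm_norm]
          gcongr
      _ ≤ eLpNorm (fun x ↦ g x - g a) p P + eLpNorm (fun x ↦ g x - g b) p Q :=
          enorm_sub_mul_inf_univ_rpow_le hp hPQ g.continuous.aestronglyMeasurable _ _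
      _ ≤ σ * ‖g‖ₑ + σ * ‖g‖ₑ := add_le_add (hP g) (hQ g)
      _ ≤ σ * 1 + σ * 1 := by gcongr
      _ = 2 * σ := by rw [mul_one, two_mul]
  rw [le_div_iff₀ (by positivity)]
  simpa [ENNReal.toReal_mul, ← ENNReal.toReal_rpow, hδ.le] using
    ENNReal.toReal_mono (by finiteness) hmain

/-- Lemma 2.5 of the paper: if two distributions with bounded `k`-th moments have overlap
at least `δ` (i.e. `d_TV ≤ 1 − δ`), then their means satisfy `‖μ₁ − μ₂‖ ≤ 2√k/δ^(1/k)`. -/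
theorem identifiability_large_corruption
    (d k : ℕ) (hd : 1 ≤ d) (hk : 2 ≤ k) (hkeven : Even k)
    (D1 D2 : Measure (EuclideanSpace ℝ (Fin d)))
    (hP1 : IsProbabilityMeasure D1) (hP2 : IsProbabilityMeasure D2)
    (hi1 : Integrable (id : EuclideanSpace ℝ (Fin d) → EuclideanSpace ℝ (Fin d)) D1)
    (hi2 : Integrable (id : EuclideanSpace ℝ (Fin d) → EuclideanSpace ℝ (Fin d)) D2)
    (μ1 μ2 : EuclideanSpace ℝ (Fin d))
    (hμ1 : μ1 = ∫ x, x ∂D1) (hμ2 : μ2 = ∫ x, x ∂D2)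
    (hint1 : ∀ v : EuclideanSpace ℝ (Fin d),
      Integrable (fun x => ⟪x - μ1, v⟫_ℝ ^ k) D1)
    (hint2 : ∀ v : EuclideanSpace ℝ (Fin d),
      Integrable (fun x => ⟪x - μ2, v⟫_ℝ ^ k) D2)
    (hmom1 : ∀ v : EuclideanSpace ℝ (Fin d),
      ∫ x, ⟪x - μ1, v⟫_ℝ ^ k ∂D1 ≤ (k : ℝ) ^ ((k : ℝ) / 2) * ‖v‖ ^ k)
    (hmom2 : ∀ v : EuclideanSpace ℝ (Fin d),
      ∫ x, ⟪x - μ2, v⟫_ℝ ^ k ∂D2 ≤ (k : ℝ) ^ ((k : ℝ) / 2) * ‖v‖ ^ k)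
    (δ : ℝ) (hδ0 : 0 < δ) (hδ1 : δ ≤ 1)
    (htv : tvDist D1 D2 ≤ 1 - δ) :
    ‖μ1 - μ2‖ ≤ 2 * Real.sqrt k / δ ^ (1 / (k : ℝ)) := by
  have hk0 : k ≠ 0 := by lia
  simpa using identifiability_large_corruption_general (p := k) (σ := NNReal.sqrt k)
    (mod_cast Nat.one_le_iff_ne_zero.2 hk0)
    (eLpNorm_dual_sub_le_of_inner_moment_le hk0 hkeven hint1 hmom1)
    (eLpNorm_dual_sub_le_of_inner_moment_le hk0 hkeven hint2 hmom2) hδ0 htv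
end

section
/- Under the constraint system together with the bounded k-th moment assumption, the following inequality holds: ((1/n)·Σ_{i=1}^n w_i·w*_i)^k · ‖μ − μ*‖^{2k} ≤ 2^k · k^{k/2} · ((1/n)·Σ_{i=1}^n w_i·w*_i)^{k−1} · ‖μ − μ*‖^k. -/
open Finset MeasureTheory
open scoped BigOperators InnerProductSpace

/-!
Put `v = μ - ν`. A common point `t` of the two samples satisfies
`‖v‖ ^ 2 = ⟪t - ν, v⟫ - ⟪t - μ, v⟫`, so by convexity of the even power `k`, `‖v‖ ^ (2 * k)` is at
most `2 ^ (k - 1)` times the sum of the `k`-th powers of the two deviations. Averaging this over the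
overlap of the samples, and enlarging the right-hand side to averages over the full samples, bounds
the mass of the overlap times `‖v‖ ^ (2 * k)` by the two `k`-th moments in the direction `v`.
-/

theorem mul_smul_sub_eq_zero_of_smul_sub_eq_zero {R M : Type*} [CommMonoid R] [AddCommGroup M]
    [DistribMulAction R M] {a b : R} {x y z : M} (hx : a • (z - x) = 0) (hy : b • (z - y) = 0) :
    (a * b) • (x - y) = 0 := by
  rw [← sub_sub_sub_cancel_left, smul_sub, mul_smul, hy, mul_comm, mul_smul, hx]
  simp only [smul_zero, sub_zero]

theorem mem_Icc_zero_one_of_sq_eq_self {R : Type*} [MonoidWithZero R]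
    [IsLeftCancelMulZero R] [Preorder R] [ZeroLEOneClass R] {a : R} (h : a ^ 2 = a) :
    a ∈ Set.Icc 0 1 := by
  rcases IsIdempotentElem.iff_eq_zero_or_one.mp (sq a ▸ h : a * a = a) with rfl | rfl
  · exact Set.left_mem_Icc.mpr zero_le_one
  · exact Set.right_mem_Icc.mpr zero_le_one

section Overlap

variable {ι E : Type*} [NormedAddCommGroup E] [InnerProductSpace ℝ E] {k : ℕ}

theorem norm_sub_pow_two_mul_le_of_even (hk : Even k) (t μ ν : E) :
    ‖μ - ν‖ ^ (2 * k) ≤ 2 ^ (k - 1) * (⟪t - μ, μ - ν⟫_ℝ ^ k + ⟪t - ν, μ - ν⟫_ℝ ^ k) := by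
  have norm_sq_eq : ‖μ - ν‖ ^ 2 = -⟪t - μ, μ - ν⟫_ℝ + ⟪t - ν, μ - ν⟫_ℝ := by
    rw [← real_inner_self_eq_norm_sq, ← inner_neg_left, ← inner_add_left]
    congr 1
    abel
  rw [pow_mul, norm_sq_eq, ← hk.neg_pow ⟪t - μ, μ - ν⟫_ℝ]
  exact hk.add_pow_le

theorem mul_norm_sub_pow_two_mul_le_of_smul_sub_eq_zero (hk : Even k) {u : ℝ} (hu : u ≤ 1)
    {x y : E} (hxy : u • (x - y) = 0) (μ ν : E) :
    u * ‖μ - ν‖ ^ (2 * k) ≤ 2 ^ (k - 1) * (⟪x - μ, μ - ν⟫_ℝ ^ k + ⟪y - ν, μ - ν⟫_ℝ ^ k) := by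
  rcases smul_eq_zero.mp hxy with rfl | hxy
  · rw [zero_mul]
    exact mul_nonneg (by positivity) (add_nonneg (hk.pow_nonneg _) (hk.pow_nonneg _))
  · rw [← sub_eq_zero.mp hxy]
    exact (mul_le_of_le_one_left (by positivity) hu).trans
      (norm_sub_pow_two_mul_le_of_even hk x μ ν)

theorem sum_mul_norm_sub_pow_two_mul_le (hk : Even k) {s : Finset ι} {p u : ι → ℝ} {x y : ι → E}
    (hp : ∀ i ∈ s, 0 ≤ p i) (hu : ∀ i ∈ s, u i ≤ 1) (hxy : ∀ i ∈ s, u i • (x i - y i) = 0)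
    (μ ν : E) :
    (∑ i ∈ s, p i * u i) * ‖μ - ν‖ ^ (2 * k) ≤
      2 ^ (k - 1) * (∑ i ∈ s, p i * ⟪x i - μ, μ - ν⟫_ℝ ^ k +
        ∑ i ∈ s, p i * ⟪y i - ν, μ - ν⟫_ℝ ^ k) := by
  rw [Finset.sum_mul, ← Finset.sum_add_distrib, Finset.mul_sum]
  refine Finset.sum_le_sum fun i hi => ?_
  calc p i * u i * ‖μ - ν‖ ^ (2 * k)
      = p i * (u i * ‖μ - ν‖ ^ (2 * k)) := mul_assoc _ _ _
    _ ≤ p i * (2 ^ (k - 1) * (⟪x i - μ, μ - ν⟫_ℝ ^ k + ⟪y i - ν, μ - ν⟫_ℝ ^ k)) :=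
        mul_le_mul_of_nonneg_left
          (mul_norm_sub_pow_two_mul_le_of_smul_sub_eq_zero hk (hu i hi) (hxy i hi) μ ν) (hp i hi)
    _ = 2 ^ (k - 1) *
          (p i * ⟪x i - μ, μ - ν⟫_ℝ ^ k + p i * ⟪y i - ν, μ - ν⟫_ℝ ^ k) := by ring

theorem hopkins_li_inequality_general (hk : Even k) (hk0 : k ≠ 0) {s : Finset ι}
    {p a b : ι → ℝ} {z x y : ι → E} (hp : ∀ i ∈ s, 0 ≤ p i)
    (ha : ∀ i ∈ s, a i ∈ Set.Icc 0 1) (hb : ∀ i ∈ s, b i ∈ Set.Icc 0 1)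
    (hax : ∀ i ∈ s, a i • (z i - x i) = 0) (hby : ∀ i ∈ s, b i • (z i - y i) = 0)
    {μ ν : E} {C : ℝ}
    (hx : ∑ i ∈ s, p i * ⟪x i - μ, μ - ν⟫_ℝ ^ k ≤ C * ‖μ - ν‖ ^ k)
    (hy : ∑ i ∈ s, p i * ⟪y i - ν, μ - ν⟫_ℝ ^ k ≤ C * ‖μ - ν‖ ^ k) :
    (∑ i ∈ s, p i * (a i * b i)) ^ k * ‖μ - ν‖ ^ (2 * k) ≤
      2 ^ k * C * (∑ i ∈ s, p i * (a i * b i)) ^ (k - 1) * ‖μ - ν‖ ^ k := by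
  have hab : ∀ i ∈ s, a i * b i ∈ Set.Icc (0 : ℝ) 1 := fun i hi =>
    unitInterval.mul_mem (ha i hi) (hb i hi)
  have hxy : ∀ i ∈ s, (a i * b i) • (x i - y i) = 0 := fun i hi =>
    mul_smul_sub_eq_zero_of_smul_sub_eq_zero (hax i hi) (hby i hi)
  have overlap_nonneg : 0 ≤ ∑ i ∈ s, p i * (a i * b i) :=
    Finset.sum_nonneg fun i hi => mul_nonneg (hp i hi) (hab i hi).1
  have overlap_mul_le := sum_mul_norm_sub_pow_two_mul_le hk hp (fun i hi => (hab i hi).2) hxy μ ν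
  set q := ∑ i ∈ s, p i * (a i * b i)
  calc q ^ k * ‖μ - ν‖ ^ (2 * k)
      = q ^ (k - 1) * (q * ‖μ - ν‖ ^ (2 * k)) := by rw [← pow_sub_one_mul hk0 q, mul_assoc]
    _ ≤ q ^ (k - 1) * (2 ^ (k - 1) * (C * ‖μ - ν‖ ^ k + C * ‖μ - ν‖ ^ k)) := by
        refine mul_le_mul_of_nonneg_left (overlap_mul_le.trans ?_) (pow_nonneg overlap_nonneg _)
        gcongr
    _ = 2 ^ k * C * q ^ (k - 1) * ‖μ - ν‖ ^ k := by
        rw [← pow_sub_one_mul hk0 (2 : ℝ)]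
        ring

end Overlap

/-- Lemma 2.6 of the paper (the Hopkins–Li SoS inequality): under the constraint system with
certifiably bounded `k`-th moments,
`((1/n)·Σ wᵢw*ᵢ)^k · ‖μ − μ*‖^(2k) ≤ 2^k · k^(k/2) · ((1/n)·Σ wᵢw*ᵢ)^(k−1) · ‖μ − μ*‖^k`. -/
theorem hopkins_li_inequality
    (n d k : ℕ) (hn : 1 ≤ n) (hd : 1 ≤ d) (hk : 2 ≤ k) (hkpow : ∃ m : ℕ, k = 2 ^ m)
    (ε : ℝ) (hε0 : 0 ≤ ε) (hε : ε < 1 / 2)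
(z x xs : Fin n → EuclideanSpace ℝ (Fin d)) (w ws : Fin n → ℝ)
    (hw : ∀ i, w i ^ 2 = w i)
    (hwz : ∀ i, w i • (z i - x i) = 0)
    (hws : ∀ i, ws i ^ 2 = ws i)
    (hwsz : ∀ i, ws i • (z i - xs i) = 0)
    (hwsum : 1 - ε ≤ (1 / (n : ℝ)) * ∑ i, w i)
    (hwssum : 1 - ε ≤ (1 / (n : ℝ)) * ∑ i, ws i)
    (μ μs : EuclideanSpace ℝ (Fin d))
    (hμ : μ = (1 / (n : ℝ)) • ∑ i, x i)
    (hμs : μs = (1 / (n : ℝ)) • ∑ i, xs i)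
    (hmom : ∀ v : EuclideanSpace ℝ (Fin d),
      (1 / (n : ℝ)) * ∑ i, ⟪x i - μ, v⟫_ℝ ^ k ≤ (k : ℝ) ^ ((k : ℝ) / 2) * ‖v‖ ^ k)
    (hmoms : ∀ v : EuclideanSpace ℝ (Fin d),
      (1 / (n : ℝ)) * ∑ i, ⟪xs i - μs, v⟫_ℝ ^ k ≤ (k : ℝ) ^ ((k : ℝ) / 2) * ‖v‖ ^ k) :
    ((1 / (n : ℝ)) * ∑ i, w i * ws i) ^ k * ‖μ - μs‖ ^ (2 * k) ≤
      2 ^ k * (k : ℝ) ^ ((k : ℝ) / 2) *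
        ((1 / (n : ℝ)) * ∑ i, w i * ws i) ^ (k - 1) * ‖μ - μs‖ ^ k := by
  obtain ⟨m, rfl⟩ := hkpow
  have even_two_pow : Even (2 ^ m) := even_two.pow_of_ne_zero (by rintro rfl; norm_num at hk)
  simp only [Finset.mul_sum] at hmom hmoms ⊢
  exact hopkins_li_inequality_general (p := fun _ => 1 / (n : ℝ)) even_two_pow
    (by positivity) (fun _ _ => by positivity)
    (fun i _ => mem_Icc_zero_one_of_sq_eq_self (hw i))
    (fun i _ => mem_Icc_zero_one_of_sq_eq_self (hws i))
    (fun i _ => hwz i) (fun i _ => hwsz i) (hmom _) (hmoms _)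
end

section
/- Under the constraint system together with the bounded-covariance assumption, the squared distance between the two empirical means satisfies ‖μ − μ*‖² ≤ 8ε/(1 − 2ε)². -/
open Finset MeasureTheory
open scoped BigOperators InnerProductSpace

/-!
Where the weights `w i` and `u i` are both nonzero, `x i = z i = y i`, so the difference `x - y`
vanishes on a `1 - 2ε` fraction of the sample, measured with the weight `w * u`. Its covariance is
at most `4`, since `(a - b) ^ 2 ≤ 2 * (a ^ 2 + b ^ 2)`. Such a sample has a small mean `m`: paired
with `m`, its deviations from `m` sum to zero and equal `-‖m‖ ^ 2` on the common inliers, so they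
must be large on the few remaining indices, and Cauchy–Schwarz there contradicts the covariance
bound unless `‖m‖ ^ 2 ≤ 8 * ε / (1 - 2 * ε)`.
-/

section WeightedSums

variable {ι : Type*} [Fintype ι]

/- The finite form of Cantelli's one-sided inequality. Keeping the weight `1 - r` on `c ^ 2` in
Cauchy–Schwarz, instead of bounding it by `1`, is what saves a factor `(∑ r) / card ι`. -/
lemma sq_mul_sum_mul_card_le_of_sum_eq_zero {c r : ι → ℝ} {t : ℝ} (hc : ∑ i, c i = 0)
    (hr : ∀ i, r i ≤ 1) (hrc : ∀ i, r i * (c i - t) = 0) :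
    t ^ 2 * (∑ i, r i) * Fintype.card ι ≤ (∑ i, (1 - r i)) * ∑ i, c i ^ 2 := by
  have first_moment : ∑ i, (1 - r i) * c i = -t * ∑ i, r i :=
    calc ∑ i, (1 - r i) * c i = ∑ i, (c i - t * r i) :=
          sum_congr rfl fun i _ => by linear_combination -hrc i
      _ = -t * ∑ i, r i := by rw [sum_sub_distrib, hc, ← mul_sum]; ring
  have second_moment : ∑ i, (1 - r i) * c i ^ 2 = ∑ i, c i ^ 2 - t ^ 2 * ∑ i, r i := by
    rw [mul_sum, ← sum_sub_distrib]
    exact sum_congr rfl fun i _ => by linear_combination -(c i + t) * hrc i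
  have cauchy_schwarz :
      (∑ i, (1 - r i) * c i) ^ 2 ≤ (∑ i, (1 - r i)) * ∑ i, (1 - r i) * c i ^ 2 :=
    sum_sq_le_sum_mul_sum_of_sq_le_mul _ (fun i _ => sub_nonneg.2 (hr i))
      (fun i _ => mul_nonneg (sub_nonneg.2 (hr i)) (sq_nonneg _)) fun i _ => le_of_eq (by ring)
  have hcard : ∑ i, (1 - r i) = Fintype.card ι - ∑ i, r i := by simp
  rw [first_moment, second_moment, hcard] at cauchy_schwarz
  rw [hcard]
  linarith

lemma sum_add_sum_sub_card_le_sum_mul {w u : ι → ℝ} (hw : ∀ i, w i ≤ 1) (hu : ∀ i, u i ≤ 1) :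
    ∑ i, w i + ∑ i, u i - Fintype.card ι ≤ ∑ i, w i * u i :=
  calc ∑ i, w i + ∑ i, u i - Fintype.card ι = ∑ i, (w i + u i - 1) := by
        simp [sum_add_distrib]
    _ ≤ ∑ i, w i * u i := sum_le_sum fun i _ => by
        linarith [mul_nonneg (sub_nonneg.2 (hw i)) (sub_nonneg.2 (hu i))]

end WeightedSums

section Samples

variable {ι E : Type*} [Fintype ι] [NormedAddCommGroup E] [InnerProductSpace ℝ E]

/-- The mean of a finite sample of vectors; it is `0` for the empty sample. -/
noncomputable def empiricalMean (x : ι → E) : E :=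
  (1 / (Fintype.card ι : ℝ)) • ∑ i, x i

/-- The empirical covariance of the sample `x` is at most `B` times the identity, stated through
its quadratic form so that no covariance operator is needed. -/
def HasCovarianceBound (B : ℝ) (x : ι → E) : Prop :=
  ∀ v : E, (1 / (Fintype.card ι : ℝ)) * ∑ i, ⟪x i - empiricalMean x, v⟫_ℝ ^ 2 ≤ B * ‖v‖ ^ 2

/-- The sample `x` is a candidate for the uncorrupted data behind the observations `z`: they agree
wherever the inlier weight `w` is nonzero, and `w` has average at least `1 - ε`. The weights are
allowed to be fractional; the polynomial constraint `w i ^ 2 = w i` singles out the values `0` and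
`1`. -/
structure IsDecontamination (ε : ℝ) (z : ι → E) (w : ι → ℝ) (x : ι → E) : Prop where
  weight_mem_Icc : ∀ i, w i ∈ Set.Icc (0 : ℝ) 1
  smul_sub_eq_zero : ∀ i, w i • (z i - x i) = 0
  one_sub_le : 1 - ε ≤ (1 / (Fintype.card ι : ℝ)) * ∑ i, w i

lemma empiricalMean_sub (x y : ι → E) :
    empiricalMean (x - y) = empiricalMean x - empiricalMean y := by
  simp only [empiricalMean, Pi.sub_apply, sum_sub_distrib, smul_sub]

lemma sum_sub_empiricalMean (x : ι → E) : ∑ i, (x i - empiricalMean x) = 0 := by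
  cases isEmpty_or_nonempty ι
  · exact Fintype.sum_empty _
  · rw [sum_sub_distrib, sum_const, card_univ, ← Nat.cast_smul_eq_nsmul ℝ, empiricalMean,
      smul_smul, mul_one_div_cancel (Nat.cast_ne_zero.2 Fintype.card_ne_zero), one_smul, sub_self]

lemma HasCovarianceBound.sub {B C : ℝ} {x y : ι → E} (hx : HasCovarianceBound B x)
    (hy : HasCovarianceBound C y) : HasCovarianceBound (2 * (B + C)) (x - y) := by
  intro v
  have pointwise (i : ι) : ⟪(x - y) i - empiricalMean (x - y), v⟫_ℝ ^ 2 ≤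
      2 * (⟪x i - empiricalMean x, v⟫_ℝ ^ 2 + ⟪y i - empiricalMean y, v⟫_ℝ ^ 2) := by
    rw [empiricalMean_sub, Pi.sub_apply, sub_sub_sub_comm, inner_sub_left]
    linarith [sq_nonneg (⟪x i - empiricalMean x, v⟫_ℝ + ⟪y i - empiricalMean y, v⟫_ℝ)]
  calc (1 / (Fintype.card ι : ℝ)) * ∑ i, ⟪(x - y) i - empiricalMean (x - y), v⟫_ℝ ^ 2
      ≤ (1 / (Fintype.card ι : ℝ)) * ∑ i,
          2 * (⟪x i - empiricalMean x, v⟫_ℝ ^ 2 + ⟪y i - empiricalMean y, v⟫_ℝ ^ 2) := by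
        gcongr with i
        exact pointwise i
    _ = 2 * ((1 / (Fintype.card ι : ℝ)) * ∑ i, ⟪x i - empiricalMean x, v⟫_ℝ ^ 2 +
          (1 / (Fintype.card ι : ℝ)) * ∑ i, ⟪y i - empiricalMean y, v⟫_ℝ ^ 2) := by
        rw [← mul_sum, sum_add_distrib]
        ring
    _ ≤ 2 * (B + C) * ‖v‖ ^ 2 := by linarith [hx v, hy v]

lemma HasCovarianceBound.norm_empiricalMean_sq_mul_sum_le {B : ℝ} {x : ι → E} {r : ι → ℝ}
    (hx : HasCovarianceBound B x) (hB : 0 ≤ B) (hr : ∀ i, r i ≤ 1) (hrx : ∀ i, r i • x i = 0) :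
    ‖empiricalMean x‖ ^ 2 * ∑ i, r i ≤ B * ∑ i, (1 - r i) := by
  set m := empiricalMean x with hm
  have outside_nonneg : 0 ≤ ∑ i, (1 - r i) := sum_nonneg fun i _ => sub_nonneg.2 (hr i)
  rcases isEmpty_or_nonempty ι with _ | _
  · simp
  rcases eq_or_ne m 0 with hm0 | hm0
  · simpa [hm0] using mul_nonneg hB outside_nonneg
  have hcard : (0 : ℝ) < Fintype.card ι := Nat.cast_pos.2 Fintype.card_pos
  have deviations_sum : ∑ i, ⟪x i - m, m⟫_ℝ = 0 := by
    rw [← sum_inner, hm, sum_sub_empiricalMean, inner_zero_left]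
  have deviation_on_weight (i : ι) : r i * (⟪x i - m, m⟫_ℝ - -‖m‖ ^ 2) = 0 := by
    rw [inner_sub_left, real_inner_self_eq_norm_sq, sub_neg_eq_add, sub_add_cancel,
      ← real_inner_smul_left, hrx, inner_zero_left]
  have second_moment : ∑ i, ⟪x i - m, m⟫_ℝ ^ 2 ≤ B * ‖m‖ ^ 2 * Fintype.card ι := by
    simpa only [one_div_mul_eq_div, div_le_iff₀ hcard] using hx m
  have scaled : (‖m‖ ^ 2 * Fintype.card ι) * (‖m‖ ^ 2 * ∑ i, r i) ≤
      (‖m‖ ^ 2 * Fintype.card ι) * (B * ∑ i, (1 - r i)) :=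
    calc (‖m‖ ^ 2 * Fintype.card ι) * (‖m‖ ^ 2 * ∑ i, r i)
        = (-‖m‖ ^ 2) ^ 2 * (∑ i, r i) * Fintype.card ι := by ring
      _ ≤ (∑ i, (1 - r i)) * ∑ i, ⟪x i - m, m⟫_ℝ ^ 2 :=
        sq_mul_sum_mul_card_le_of_sum_eq_zero deviations_sum hr deviation_on_weight
      _ ≤ (∑ i, (1 - r i)) * (B * ‖m‖ ^ 2 * Fintype.card ι) := by gcongr
      _ = (‖m‖ ^ 2 * Fintype.card ι) * (B * ∑ i, (1 - r i)) := by ring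
  exact le_of_mul_le_mul_left scaled (by positivity)

namespace IsDecontamination

variable {ε : ℝ} {z x y : ι → E} {w u : ι → ℝ}

lemma nonempty (hx : IsDecontamination ε z w x) (hε : ε < 1) : Nonempty ι := by
  by_contra hι
  have := not_nonempty_iff.1 hι
  have hmass := hx.one_sub_le
  rw [Fintype.sum_empty, mul_zero] at hmass
  linarith

lemma card_mul_one_sub_le_sum (hx : IsDecontamination ε z w x) :
    Fintype.card ι * (1 - ε) ≤ ∑ i, w i := by
  rcases isEmpty_or_nonempty ι with _ | _
  · simp
  have hcard : (0 : ℝ) < Fintype.card ι := Nat.cast_pos.2 Fintype.card_pos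
  simpa only [one_div_mul_eq_div, le_div_iff₀' hcard] using hx.one_sub_le

lemma mul_smul_sub_eq_zero (hx : IsDecontamination ε z w x) (hy : IsDecontamination ε z u y)
    (i : ι) : (w i * u i) • (x i - y i) = 0 :=
  calc (w i * u i) • (x i - y i) = w i • u i • (z i - y i) - u i • w i • (z i - x i) := by module
    _ = 0 := by rw [hy.smul_sub_eq_zero, hx.smul_sub_eq_zero, smul_zero, smul_zero, sub_zero]

lemma card_mul_one_sub_two_mul_le_sum_mul (hx : IsDecontamination ε z w x)
    (hy : IsDecontamination ε z u y) : Fintype.card ι * (1 - 2 * ε) ≤ ∑ i, w i * u i := by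
  have overlap := sum_add_sum_sub_card_le_sum_mul (fun i => (hx.weight_mem_Icc i).2)
    fun i => (hy.weight_mem_Icc i).2
  linarith [hx.card_mul_one_sub_le_sum, hy.card_mul_one_sub_le_sum]

lemma of_sq_eq_self (hw : ∀ i, w i ^ 2 = w i) (hwx : ∀ i, w i • (z i - x i) = 0)
    (hmass : 1 - ε ≤ (1 / (Fintype.card ι : ℝ)) * ∑ i, w i) : IsDecontamination ε z w x where
  weight_mem_Icc i := ⟨hw i ▸ sq_nonneg (w i), by linarith [hw i, sq_nonneg (w i - 1)]⟩
  smul_sub_eq_zero := hwx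
  one_sub_le := hmass

end IsDecontamination

theorem bounded_covariance_optimal_breakdown_general {ε B : ℝ} {z x y : ι → E} {w u : ι → ℝ}
    (hε : ε < 1 / 2) (hB : 0 ≤ B) (hx : IsDecontamination ε z w x)
    (hy : IsDecontamination ε z u y) (hcovx : HasCovarianceBound B x)
    (hcovy : HasCovarianceBound B y) :
    ‖empiricalMean x - empiricalMean y‖ ^ 2 ≤ 8 * B * ε / (1 - 2 * ε) := by
  have := hx.nonempty (by linarith)
  have hcard : (0 : ℝ) < Fintype.card ι := Nat.cast_pos.2 Fintype.card_pos
  have overlap := hx.card_mul_one_sub_two_mul_le_sum_mul hy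
  have outside : ∑ i, (1 - w i * u i) ≤ Fintype.card ι * (2 * ε) := by
    rw [sum_sub_distrib, sum_const, card_univ, nsmul_one]
    linarith
  have mean_bound := (hcovx.sub hcovy).norm_empiricalMean_sq_mul_sum_le (by positivity)
    (fun i => mul_le_one₀ (hx.weight_mem_Icc i).2 (hy.weight_mem_Icc i).1
      (hy.weight_mem_Icc i).2) (hx.mul_smul_sub_eq_zero hy)
  rw [empiricalMean_sub] at mean_bound
  rw [le_div_iff₀ (by linarith)]
  refine le_of_mul_le_mul_left ?_ hcard
  calc Fintype.card ι * (‖empiricalMean x - empiricalMean y‖ ^ 2 * (1 - 2 * ε))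
      = ‖empiricalMean x - empiricalMean y‖ ^ 2 * (Fintype.card ι * (1 - 2 * ε)) := by ring
    _ ≤ ‖empiricalMean x - empiricalMean y‖ ^ 2 * ∑ i, w i * u i := by gcongr
    _ ≤ 2 * (B + B) * ∑ i, (1 - w i * u i) := mean_bound
    _ ≤ 2 * (B + B) * (Fintype.card ι * (2 * ε)) := by gcongr
    _ = Fintype.card ι * (8 * B * ε) := by ring

end Samples

/-- Theorem D.1 of the paper: optimal breakdown point for the bounded covariance case,
`‖μ − μ*‖² ≤ 8ε/(1 − 2ε)²`. -/
theorem bounded_covariance_optimal_breakdown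
    (n d : ℕ) (hn : 1 ≤ n) (hd : 1 ≤ d)
    (ε : ℝ) (hε0 : 0 ≤ ε) (hε : ε < 1 / 2)
(z x xs : Fin n → EuclideanSpace ℝ (Fin d)) (w ws : Fin n → ℝ)
    (hw : ∀ i, w i ^ 2 = w i)
    (hwz : ∀ i, w i • (z i - x i) = 0)
    (hws : ∀ i, ws i ^ 2 = ws i)
    (hwsz : ∀ i, ws i • (z i - xs i) = 0)
    (hwsum : 1 - ε ≤ (1 / (n : ℝ)) * ∑ i, w i)
    (hwssum : 1 - ε ≤ (1 / (n : ℝ)) * ∑ i, ws i)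
    (μ μs : EuclideanSpace ℝ (Fin d))
    (hμ : μ = (1 / (n : ℝ)) • ∑ i, x i)
    (hμs : μs = (1 / (n : ℝ)) • ∑ i, xs i)
    (hcov : ∀ v : EuclideanSpace ℝ (Fin d),
      (1 / (n : ℝ)) * ∑ i, ⟪x i - μ, v⟫_ℝ ^ 2 ≤ ‖v‖ ^ 2)
    (hcovs : ∀ v : EuclideanSpace ℝ (Fin d),
      (1 / (n : ℝ)) * ∑ i, ⟪xs i - μs, v⟫_ℝ ^ 2 ≤ ‖v‖ ^ 2) :
    ‖μ - μs‖ ^ 2 ≤ 8 * ε / (1 - 2 * ε) ^ 2 := by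
  have hx : IsDecontamination ε z w x := .of_sq_eq_self hw hwz (by rwa [Fintype.card_fin])
  have hxs : IsDecontamination ε z ws xs := .of_sq_eq_self hws hwsz (by rwa [Fintype.card_fin])
  have hmean : empiricalMean x = μ := by rw [hμ, empiricalMean, Fintype.card_fin]
  have hmeans : empiricalMean xs = μs := by rw [hμs, empiricalMean, Fintype.card_fin]
  have hcovx : HasCovarianceBound 1 x := by
    simpa only [HasCovarianceBound, hmean, Fintype.card_fin, one_mul] using hcov
  have hcovxs : HasCovarianceBound 1 xs := by
    simpa only [HasCovarianceBound, hmeans, Fintype.card_fin, one_mul] using hcovs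
  calc ‖μ - μs‖ ^ 2 ≤ 8 * ε / (1 - 2 * ε) := by
        simpa only [hmean, hmeans, mul_one] using
          bounded_covariance_optimal_breakdown_general hε zero_le_one hx hxs hcovx hcovxs
    _ ≤ 8 * ε / (1 - 2 * ε) ^ 2 := div_le_div_of_nonneg_left (by positivity)
        (pow_pos (by linarith) 2) (pow_le_of_le_one (by linarith) (by linarith) two_ne_zero)
end

section
/- Under the constraint system together with the bounded k-th moment assumption, with δ = 1 − 2ε, the distance between the two empirical means satisfies ‖μ − μ*‖^k ≤ 2^{2k−1} · ε^{k−1} · k^{k/2} / δ^k. -/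
open Finset MeasureTheory
open scoped BigOperators InnerProductSpace

/-!
The constraints force `x` and `x*` to agree off a set of at most `2εn` indices, and the residuals
`(x i - μ) - (x* i - μ*)` sum to `(n - h) • (μ - μ*)` over the `h` indices where the two families
differ. Pairing with `v = μ - μ*` and applying the power mean inequality to these `h` terms bounds
`((n - h) ‖v‖²) ^ k` by `h ^ (k - 1)` times the `k`-th moments in direction `v`, which are of order
`n ‖v‖ ^ k`; one factor `‖v‖ ^ k` then cancels.
-/

lemma pow_sum_le_card_mul_sum_pow_of_even {ι R : Type*} [Field R] [LinearOrder R]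
    [IsStrictOrderedRing R] (s : Finset ι) (f : ι → R) {k : ℕ} (hk : Even k) (hk0 : k ≠ 0) :
    (∑ i ∈ s, f i) ^ k ≤ (#s : R) ^ (k - 1) * ∑ i ∈ s, f i ^ k := by
  obtain ⟨m, rfl⟩ := Nat.exists_eq_succ_of_ne_zero hk0
  calc (∑ i ∈ s, f i) ^ (m + 1) = |∑ i ∈ s, f i| ^ (m + 1) := (hk.pow_abs _).symm
    _ ≤ (∑ i ∈ s, |f i|) ^ (m + 1) := by gcongr; exact abs_sum_le_sum_abs f s
    _ ≤ (#s : R) ^ m * ∑ i ∈ s, |f i| ^ (m + 1) :=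
      pow_sum_le_card_mul_sum_pow (fun i _ => abs_nonneg (f i)) m
    _ = (#s : R) ^ m * ∑ i ∈ s, f i ^ (m + 1) := by simp only [hk.pow_abs]

section Mean

variable {ι E : Type*} [Fintype ι] [DecidableEq E]

lemma hammingDist_le_sum_one_sub [AddCommGroup E] [Module ℝ E] {z x : ι → E} {w : ι → ℝ}
    (hw : ∀ i, w i ≤ 1) (hwz : ∀ i, w i • (z i - x i) = 0) :
    (hammingDist z x : ℝ) ≤ ∑ i, (1 - w i) := by
  rw [hammingDist, ← sum_boole]
  refine sum_le_sum fun i _ => ?_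
  split_ifs with hne
  · have hwi : w i = 0 := (smul_eq_zero.mp (hwz i)).resolve_right (sub_ne_zero.mpr hne)
    rw [hwi, sub_zero]
  · exact sub_nonneg.mpr (hw i)

lemma hammingDist_le_mul_card [AddCommGroup E] [Module ℝ E] [Nonempty ι] {ε : ℝ}
    {z x : ι → E} {w : ι → ℝ} (hw : ∀ i, w i ≤ 1) (hwz : ∀ i, w i • (z i - x i) = 0)
    (hwsum : 1 - ε ≤ (1 / (Fintype.card ι : ℝ)) * ∑ i, w i) :
    (hammingDist z x : ℝ) ≤ ε * Fintype.card ι := by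
  have hcard : (0 : ℝ) < Fintype.card ι := Nat.cast_pos.mpr Fintype.card_pos
  rw [one_div_mul_eq_div, le_div_iff₀ hcard] at hwsum
  have hle := hammingDist_le_sum_one_sub hw hwz
  rw [sum_sub_distrib, sum_const, card_univ, nsmul_one] at hle
  linarith

lemma sum_ne_centered_sub_centered [AddCommGroup E] {R : Type*} [Ring R] [Module R E] {x y : ι → E}
    {μ ν : E} (hμ : (Fintype.card ι : R) • μ = ∑ i, x i)
    (hν : (Fintype.card ι : R) • ν = ∑ i, y i) :
    ∑ i with x i ≠ y i, ((x i - μ) - (y i - ν)) =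
      ((Fintype.card ι : R) - hammingDist x y) • (μ - ν) := by
  have hdiff : ∑ i with x i ≠ y i, (x i - y i) = (Fintype.card ι : R) • (μ - ν) := by
    rw [sum_filter_of_ne fun i _ => sub_ne_zero.mp, sum_sub_distrib, smul_sub, hμ, hν]
  simp only [sub_sub_sub_comm (x _) μ]
  rw [sum_sub_distrib, hdiff, sum_const, sub_smul, hammingDist, Nat.cast_smul_eq_nsmul R #_]

variable [NormedAddCommGroup E] [InnerProductSpace ℝ E]

lemma pow_card_sub_hammingDist_mul_inner_le {x y : ι → E} {μ ν : E}
    (hμ : (Fintype.card ι : ℝ) • μ = ∑ i, x i) (hν : (Fintype.card ι : ℝ) • ν = ∑ i, y i)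
    {k : ℕ} (hk : Even k) (hk0 : k ≠ 0) (v : E) :
    ((Fintype.card ι - hammingDist x y) * ⟪μ - ν, v⟫_ℝ) ^ k ≤
      (hammingDist x y : ℝ) ^ (k - 1) *
        (2 ^ (k - 1) * (∑ i, ⟪x i - μ, v⟫_ℝ ^ k + ∑ i, ⟪y i - ν, v⟫_ℝ ^ k)) := by
  have hsum : (Fintype.card ι - hammingDist x y) * ⟪μ - ν, v⟫_ℝ =
      ∑ i with x i ≠ y i, (⟪x i - μ, v⟫_ℝ - ⟪y i - ν, v⟫_ℝ) := by
    rw [← real_inner_smul_left, ← sum_ne_centered_sub_centered hμ hν, sum_inner]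
    simp only [inner_sub_left]
  rw [hsum]
  refine (pow_sum_le_card_mul_sum_pow_of_even _ _ hk hk0).trans
    (mul_le_mul_of_nonneg_left ?_ (by positivity))
  calc ∑ i with x i ≠ y i, (⟪x i - μ, v⟫_ℝ - ⟪y i - ν, v⟫_ℝ) ^ k
      ≤ ∑ i, (⟪x i - μ, v⟫_ℝ - ⟪y i - ν, v⟫_ℝ) ^ k :=
        sum_le_sum_of_subset_of_nonneg (filter_subset _ _) fun _ _ _ => hk.pow_nonneg _
    _ ≤ ∑ i, 2 ^ (k - 1) * (⟪x i - μ, v⟫_ℝ ^ k + ⟪y i - ν, v⟫_ℝ ^ k) := by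
        refine sum_le_sum fun i _ => ?_
        simpa only [sub_eq_add_neg, hk.neg_pow] using
          hk.add_pow_le (a := ⟪x i - μ, v⟫_ℝ) (b := -⟪y i - ν, v⟫_ℝ)
    _ = 2 ^ (k - 1) * (∑ i, ⟪x i - μ, v⟫_ℝ ^ k + ∑ i, ⟪y i - ν, v⟫_ℝ ^ k) := by
        rw [← mul_sum, sum_add_distrib]

variable [Nonempty ι]

lemma one_sub_pow_mul_inner_pow_le {x y : ι → E} {μ ν : E}
    (hμ : μ = (1 / (Fintype.card ι : ℝ)) • ∑ i, x i)
    (hν : ν = (1 / (Fintype.card ι : ℝ)) • ∑ i, y i)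
    {ρ : ℝ} (hρ : ρ ≤ 1) (hxy : (hammingDist x y : ℝ) ≤ ρ * Fintype.card ι)
    {k : ℕ} (hk : Even k) (hk0 : k ≠ 0) (v : E) :
    (1 - ρ) ^ k * ⟪μ - ν, v⟫_ℝ ^ k ≤
      (2 * ρ) ^ (k - 1) * ((1 / (Fintype.card ι : ℝ)) * ∑ i, ⟪x i - μ, v⟫_ℝ ^ k +
        (1 / (Fintype.card ι : ℝ)) * ∑ i, ⟪y i - ν, v⟫_ℝ ^ k) := by
  set n : ℝ := (Fintype.card ι : ℝ)
  set h : ℝ := (hammingDist x y : ℝ)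
  have hn : 0 < n := Nat.cast_pos.mpr Fintype.card_pos
  rw [one_div, eq_inv_smul_iff₀ hn.ne'] at hμ hν
  rw [← mul_add]
  set S : ℝ := ∑ i, ⟪x i - μ, v⟫_ℝ ^ k + ∑ i, ⟪y i - ν, v⟫_ℝ ^ k
  have hS : 0 ≤ S := add_nonneg (sum_nonneg fun _ _ => hk.pow_nonneg _)
    (sum_nonneg fun _ _ => hk.pow_nonneg _)
  have hagree : (1 - ρ) * n ≤ n - h := by linarith
  refine le_of_mul_le_mul_left ?_ (pow_pos hn k)
  calc n ^ k * ((1 - ρ) ^ k * ⟪μ - ν, v⟫_ℝ ^ k) = ((1 - ρ) * n) ^ k * ⟪μ - ν, v⟫_ℝ ^ k := by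
        rw [mul_pow]
        ring
    _ ≤ (n - h) ^ k * ⟪μ - ν, v⟫_ℝ ^ k :=
        mul_le_mul_of_nonneg_right
          (pow_le_pow_left₀ (mul_nonneg (sub_nonneg.mpr hρ) hn.le) hagree k) (hk.pow_nonneg _)
    _ = ((n - h) * ⟪μ - ν, v⟫_ℝ) ^ k := (mul_pow _ _ _).symm
    _ ≤ h ^ (k - 1) * (2 ^ (k - 1) * S) :=
        pow_card_sub_hammingDist_mul_inner_le hμ hν hk hk0 v
    _ ≤ (ρ * n) ^ (k - 1) * (2 ^ (k - 1) * S) := by gcongr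
    _ = n ^ k * ((2 * ρ) ^ (k - 1) * (1 / n * S)) := by
        rw [← pow_sub_one_mul hk0 n, mul_pow, mul_pow]
        field_simp

theorem norm_mean_sub_mean_pow_le {x y : ι → E} {μ ν : E}
    (hμ : μ = (1 / (Fintype.card ι : ℝ)) • ∑ i, x i)
    (hν : ν = (1 / (Fintype.card ι : ℝ)) • ∑ i, y i)
    {ρ : ℝ} (hρ : ρ < 1) (hxy : (hammingDist x y : ℝ) ≤ ρ * Fintype.card ι)
    {k : ℕ} (hk : Even k) (hk0 : k ≠ 0) {M : ℝ} (hM : 0 ≤ M)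
    (hx : ∀ v, (1 / (Fintype.card ι : ℝ)) * ∑ i, ⟪x i - μ, v⟫_ℝ ^ k ≤ M * ‖v‖ ^ k)
    (hy : ∀ v, (1 / (Fintype.card ι : ℝ)) * ∑ i, ⟪y i - ν, v⟫_ℝ ^ k ≤ M * ‖v‖ ^ k) :
    ‖μ - ν‖ ^ k ≤ 2 ^ k * ρ ^ (k - 1) * M / (1 - ρ) ^ k := by
  have hρ0 : 0 ≤ ρ := nonneg_of_mul_nonneg_left ((Nat.cast_nonneg _).trans hxy)
    (Nat.cast_pos.mpr Fintype.card_pos)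
  have hδ : 0 < 1 - ρ := sub_pos.mpr hρ
  rw [le_div_iff₀ (pow_pos hδ k)]
  rcases (norm_nonneg (μ - ν)).eq_or_lt with hzero | hpos
  · rw [← hzero, zero_pow hk0, zero_mul]
    positivity
  refine le_of_mul_le_mul_right ?_ (pow_pos hpos k)
  calc ‖μ - ν‖ ^ k * (1 - ρ) ^ k * ‖μ - ν‖ ^ k = (1 - ρ) ^ k * ⟪μ - ν, μ - ν⟫_ℝ ^ k := by
        rw [real_inner_self_eq_norm_mul_norm, mul_pow]
        ring
    _ ≤ (2 * ρ) ^ (k - 1) * (M * ‖μ - ν‖ ^ k + M * ‖μ - ν‖ ^ k) :=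
        (one_sub_pow_mul_inner_pow_le hμ hν hρ.le hxy hk hk0 _).trans
          (mul_le_mul_of_nonneg_left (add_le_add (hx _) (hy _)) (by positivity))
    _ = 2 ^ k * ρ ^ (k - 1) * M * ‖μ - ν‖ ^ k := by
        rw [← pow_sub_one_mul hk0 (2 : ℝ), mul_pow]
        ring

end Mean

theorem bounded_kth_moment_optimal_breakdown_general {ι E : Type*} [Fintype ι] [Nonempty ι]
    [NormedAddCommGroup E] [InnerProductSpace ℝ E] {k : ℕ} (hk : Even k) (hk0 : k ≠ 0)
    {ε : ℝ} (hε : ε < 1 / 2) {z x xs : ι → E} {w ws : ι → ℝ}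
    (hw : ∀ i, w i ≤ 1) (hwz : ∀ i, w i • (z i - x i) = 0)
    (hws : ∀ i, ws i ≤ 1) (hwsz : ∀ i, ws i • (z i - xs i) = 0)
    (hwsum : 1 - ε ≤ (1 / (Fintype.card ι : ℝ)) * ∑ i, w i)
    (hwssum : 1 - ε ≤ (1 / (Fintype.card ι : ℝ)) * ∑ i, ws i)
    {μ μs : E} (hμ : μ = (1 / (Fintype.card ι : ℝ)) • ∑ i, x i)
    (hμs : μs = (1 / (Fintype.card ι : ℝ)) • ∑ i, xs i) {M : ℝ} (hM : 0 ≤ M)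
    (hmom : ∀ v, (1 / (Fintype.card ι : ℝ)) * ∑ i, ⟪x i - μ, v⟫_ℝ ^ k ≤ M * ‖v‖ ^ k)
    (hmoms : ∀ v, (1 / (Fintype.card ι : ℝ)) * ∑ i, ⟪xs i - μs, v⟫_ℝ ^ k ≤ M * ‖v‖ ^ k) :
    ‖μ - μs‖ ^ k ≤ 2 ^ (2 * k - 1) * ε ^ (k - 1) * M / (1 - 2 * ε) ^ k := by
  classical
  have hdist : (hammingDist x xs : ℝ) ≤ 2 * ε * Fintype.card ι := calc
    (hammingDist x xs : ℝ) ≤ hammingDist z x + hammingDist z xs := by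
      exact_mod_cast hammingDist_triangle_left x xs z
    _ ≤ ε * Fintype.card ι + ε * Fintype.card ι :=
      add_le_add (hammingDist_le_mul_card hw hwz hwsum) (hammingDist_le_mul_card hws hwsz hwssum)
    _ = 2 * ε * Fintype.card ι := by ring
  have hbound :=
    norm_mean_sub_mean_pow_le hμ hμs (by linarith) hdist hk hk0 hM hmom hmoms
  rwa [mul_pow, ← mul_assoc, ← pow_add, show k + (k - 1) = 2 * k - 1 by lia] at hbound

/-- Theorem D.2 of the paper: optimal breakdown point for certifiably bounded `k`-th moments,
`‖μ − μ*‖^k ≤ 2^(2k−1) · ε^(k−1) · k^(k/2) / δ^k` with `δ = 1 − 2ε`. -/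
theorem bounded_kth_moment_optimal_breakdown
    (n d k : ℕ) (hn : 1 ≤ n) (hd : 1 ≤ d) (hk : 2 ≤ k) (hkpow : ∃ m : ℕ, k = 2 ^ m)
    (ε : ℝ) (hε0 : 0 ≤ ε) (hε : ε < 1 / 2)
(z x xs : Fin n → EuclideanSpace ℝ (Fin d)) (w ws : Fin n → ℝ)
    (hw : ∀ i, w i ^ 2 = w i)
    (hwz : ∀ i, w i • (z i - x i) = 0)
    (hws : ∀ i, ws i ^ 2 = ws i)
    (hwsz : ∀ i, ws i • (z i - xs i) = 0)
    (hwsum : 1 - ε ≤ (1 / (n : ℝ)) * ∑ i, w i)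
    (hwssum : 1 - ε ≤ (1 / (n : ℝ)) * ∑ i, ws i)
    (μ μs : EuclideanSpace ℝ (Fin d))
    (hμ : μ = (1 / (n : ℝ)) • ∑ i, x i)
    (hμs : μs = (1 / (n : ℝ)) • ∑ i, xs i)
    (hmom : ∀ v : EuclideanSpace ℝ (Fin d),
      (1 / (n : ℝ)) * ∑ i, ⟪x i - μ, v⟫_ℝ ^ k ≤ (k : ℝ) ^ ((k : ℝ) / 2) * ‖v‖ ^ k)
    (hmoms : ∀ v : EuclideanSpace ℝ (Fin d),
      (1 / (n : ℝ)) * ∑ i, ⟪xs i - μs, v⟫_ℝ ^ k ≤ (k : ℝ) ^ ((k : ℝ) / 2) * ‖v‖ ^ k) :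
    ‖μ - μs‖ ^ k ≤
      2 ^ (2 * k - 1) * ε ^ (k - 1) * (k : ℝ) ^ ((k : ℝ) / 2) / (1 - 2 * ε) ^ k := by
  have : Nonempty (Fin n) := ⟨⟨0, hn⟩⟩
  have hk0 : k ≠ 0 := by lia
  have hkeven : Even k := by
    obtain ⟨m, rfl⟩ := hkpow
    exact even_two.pow_of_ne_zero fun hm => by simp [hm] at hk
  have hle_one {t : ℝ} (ht : t ^ 2 = t) : t ≤ 1 := by nlinarith [sq_nonneg (t - 1)]
  refine bounded_kth_moment_optimal_breakdown_general hkeven hk0 hε (fun i => hle_one (hw i)) hwz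
    (fun i => hle_one (hws i)) hwsz ?_ ?_ ?_ ?_ (by positivity) ?_ ?_ <;> rwa [Fintype.card_fin]
end

section
/- For every ε ∈ (0, 1/2) there exist Borel probability distributions D1 and D2 on ℝ such that: (1) d_TV(D1, D2) ≤ 2ε; (2) D1 and D2 each have finite mean and variance at most 1; (3) the means μ1 of D1 and μ2 of D2 satisfy |μ1 − μ2| ≥ √(ε/(1 − 2ε)). -/
open MeasureTheory

/-!
Moving mass `p` from `0` to `a` changes `δ_0` by at most `p` in total variation, while it shifts
the mean by `p * a` and creates variance `p * (1 - p) * a ^ 2`. Choosing `a` so that this variance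
is `1` makes the shift `√(p / (1 - p))`, which for `p = 2 * ε` is even `√2` times the required gap.
-/

open ProbabilityTheory unitInterval

section TotalVariation

variable {α : Type*} [MeasurableSpace α] (μ ν : Measure α)

theorem tvDist_le_one [IsZeroOrProbabilityMeasure μ] [IsZeroOrProbabilityMeasure ν] :
    tvDist μ ν ≤ 1 :=
  Real.iSup_le (fun _ ↦ abs_sub_le_of_nonneg_of_le measureReal_nonneg measureReal_le_one
    measureReal_nonneg measureReal_le_one) zero_le_one

theorem tvDist_convexComb_right [IsFiniteMeasure μ] [IsFiniteMeasure ν] (p : I) :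
    tvDist μ (toNNReal p • ν + toNNReal (σ p) • μ) = p * tvDist μ ν := by
  have event_gap (A : Set α) :
      |μ.real A - (toNNReal p • ν + toNNReal (σ p) • μ).real A| = p * |μ.real A - ν.real A| := by
    have mixture_real : (toNNReal p • ν + toNNReal (σ p) • μ).real A
        = p * ν.real A + (1 - p) * μ.real A := by
      rw [measureReal_add_apply, measureReal_nnreal_smul_apply, measureReal_nnreal_smul_apply,
        coe_toNNReal, coe_toNNReal, coe_symm_eq]
    calc |μ.real A - (toNNReal p • ν + toNNReal (σ p) • μ).real A|
        = |p * (μ.real A - ν.real A)| := by rw [mixture_real]; ring_nf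
      _ = p * |μ.real A - ν.real A| := by rw [abs_mul, abs_of_nonneg p.2.1]
  simp only [tvDist, ← measureReal_def, event_gap, Real.mul_iSup_of_nonneg p.2.1]

end TotalVariation

section Bernoulli

variable {X : Type*} [MeasurableSpace X]

theorem tvDist_dirac_bernoulliMeasure_le (x y : X) (p : I) :
    tvDist (Measure.dirac y) Ber(x, y, p) ≤ p := by
  rw [bernoulliMeasure_def, tvDist_convexComb_right]
  exact mul_le_of_le_one_right p.2.1 (tvDist_le_one _ _)

theorem variance_bernoulliMeasure [MeasurableSingletonClass X] (x y : X) (p : I) (f : X → ℝ) :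
    Var[f; Ber(x, y, p)] = p * (1 - p) * (f x - f y) ^ 2 := by
  rw [variance_eq_integral (integrable_bernoulliMeasure x y p f).aemeasurable]
  simp only [integral_bernoulliMeasure, smul_eq_mul]
  ring

theorem exists_bernoulliMeasure_variance_eq_one (p : I) (hp0 : 0 < (p : ℝ)) (hp1 : (p : ℝ) < 1) :
    ∃ a : ℝ, Var[id; Ber(a, 0, p)] = 1 ∧ ∫ x, x ∂Ber(a, 0, p) = √(p / (1 - p)) := by
  have hq : 0 < 1 - (p : ℝ) := sub_pos.2 hp1
  have hpq : 0 < (p : ℝ) * (1 - p) := mul_pos hp0 hq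
  refine ⟨(√(p * (1 - p)))⁻¹, ?_, ?_⟩
  · rw [variance_bernoulliMeasure, id, id, sub_zero, inv_pow, Real.sq_sqrt hpq.le,
      mul_inv_cancel₀ hpq.ne']
  · calc ∫ x, x ∂Ber((√(p * (1 - p)))⁻¹, 0, p)
        = p / (√p * √(1 - p)) := by
          rw [integral_bernoulliMeasure, Real.sqrt_mul hp0.le, smul_zero, add_zero, smul_eq_mul,
            div_eq_mul_inv]
      _ = √(p / (1 - p)) := by rw [← div_div, Real.div_sqrt, Real.sqrt_div hp0.le]

end Bernoulli

/-- Lemma 1.2 of the paper: the information-theoretic lower bound for robust mean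
estimation of bounded variance distributions. For every `ε ∈ (0, 1/2)` there are two
one-dimensional distributions with total variation distance at most `2ε`, variance at most
`1`, and means at least `√(ε/(1 − 2ε))` apart. -/
theorem lower_bound_bounded_covariance (ε : ℝ) (hε0 : 0 < ε) (hε : ε < 1 / 2) :
    ∃ D1 D2 : Measure ℝ, IsProbabilityMeasure D1 ∧ IsProbabilityMeasure D2 ∧
      tvDist D1 D2 ≤ 2 * ε ∧
      Integrable (id : ℝ → ℝ) D1 ∧ Integrable (id : ℝ → ℝ) D2 ∧
      Integrable (fun x => (x - ∫ y, y ∂D1) ^ 2) D1 ∧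
      Integrable (fun x => (x - ∫ y, y ∂D2) ^ 2) D2 ∧
      (∫ x, (x - ∫ y, y ∂D1) ^ 2 ∂D1) ≤ 1 ∧
      (∫ x, (x - ∫ y, y ∂D2) ^ 2 ∂D2) ≤ 1 ∧
      Real.sqrt (ε / (1 - 2 * ε)) ≤ |(∫ y, y ∂D1) - ∫ y, y ∂D2| := by
  let p : I := ⟨2 * ε, by linarith, by linarith⟩
  obtain ⟨a, variance_eq_one, mean_eq⟩ :=
    exists_bernoulliMeasure_variance_eq_one p (by positivity) (by linarith)
  refine ⟨Measure.dirac 0, Ber(a, 0, p), inferInstance, inferInstance,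
    tvDist_dirac_bernoulliMeasure_le a 0 p,
    integrable_dirac (by simp), integrable_bernoulliMeasure _ _ _ _,
    integrable_dirac (by simp), integrable_bernoulliMeasure _ _ _ _, by simp, ?_, ?_⟩
  · exact (variance_eq_integral aemeasurable_id).symm.trans_le variance_eq_one.le
  · rw [mean_eq, integral_dirac, zero_sub, abs_neg, abs_of_nonneg (Real.sqrt_nonneg _)]
    have hq : 0 < 1 - 2 * ε := by linarith
    have eps_le : ε ≤ 2 * ε := by linarith
    exact Real.sqrt_le_sqrt (div_le_div_of_nonneg_right eps_le hq.le)
end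

section
/- For every ε ∈ [1/4, 1/2) there exist real numbers μ1 and μ2 such that the one-dimensional Gaussian distributions N(μ1, 1) and N(μ2, 1) satisfy: (1) d_TV(N(μ1,1), N(μ2,1)) ≤ 2ε; (2) |μ1 − μ2| ≥ √(log(1/(1 − 2ε)) − log 2). -/
open MeasureTheory ProbabilityTheory

/-!
If `R ≤ P` and `R ≤ Q`, the probability measures `P` and `Q` share the mass of `R`, so they are at
total variation distance at most `1 - R(univ)`. The Gaussians `N(μ, v)` and `N(ν, v)` share the
multiple `exp (-(μ - ν)² / (4v)) / √2` of `N((μ + ν) / 2, v / 2)`, because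
`(a + b)² ≤ 2 (a² + b²)`. This replaces the Bretagnolle–Huber inequality, which only gives the
shared mass `exp (-(μ - ν)² / (2v)) / 2`.
-/

open scoped NNReal

lemma tvDist_le_one_sub_of_le {α : Type*} [MeasurableSpace α] {P Q R : Measure α}
    [IsProbabilityMeasure P] [IsProbabilityMeasure Q] (hP : R ≤ P) (hQ : R ≤ Q) :
    tvDist P Q ≤ 1 - R.real Set.univ := by
  have : IsFiniteMeasure R := isFiniteMeasure_of_le P hP
  have real_le {S : Measure α} [IsFiniteMeasure S] (hS : R ≤ S) (s : Set α) :
      R.real s ≤ S.real s := ENNReal.toReal_mono (measure_ne_top S s) (hS s)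
  have : Nonempty {s : Set α // MeasurableSet s} := ⟨∅, MeasurableSet.empty⟩
  refine ciSup_le fun ⟨A, hA⟩ => ?_
  change |P.real A - Q.real A| ≤ 1 - R.real Set.univ
  have hR : R.real A + R.real Aᶜ = R.real Set.univ := measureReal_add_measureReal_compl hA
  have hPc : P.real Aᶜ = 1 - P.real A := probReal_compl_eq_one_sub hA
  have hQc : Q.real Aᶜ = 1 - Q.real A := probReal_compl_eq_one_sub hA
  rw [abs_le]
  constructor <;> linarith [real_le hP A, real_le hP Aᶜ, real_le hQ A, real_le hQ Aᶜ]

lemma mul_gaussianPDFReal_half_var_le (μ ν : ℝ) (v : ℝ≥0) (x : ℝ) :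
    Real.exp (-(μ - ν) ^ 2 / v) / √2 * gaussianPDFReal ν (v / 2) x ≤ gaussianPDFReal μ v x := by
  have hsqrt : √(2 * Real.pi * v) = √2 * √(2 * Real.pi * (v / 2)) := by
    rw [← Real.sqrt_mul zero_le_two]
    ring_nf
  have hsq : (x - μ) ^ 2 ≤ 2 * ((μ - ν) ^ 2 + (x - ν) ^ 2) := by
    linarith [add_sq_le (a := ν - μ) (b := x - ν)]
  have hexponent : -(μ - ν) ^ 2 / v + -(x - ν) ^ 2 / (2 * (v / 2)) ≤ -(x - μ) ^ 2 / (2 * v) :=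
    calc -(μ - ν) ^ 2 / v + -(x - ν) ^ 2 / (2 * (v / 2))
        = -(2 * ((μ - ν) ^ 2 + (x - ν) ^ 2)) / (2 * v) := by ring
      _ ≤ -(x - μ) ^ 2 / (2 * v) := by gcongr
  simp only [gaussianPDFReal, NNReal.coe_div, NNReal.coe_ofNat]
  calc Real.exp (-(μ - ν) ^ 2 / v) / √2 *
        ((√(2 * Real.pi * (v / 2)))⁻¹ * Real.exp (-(x - ν) ^ 2 / (2 * (v / 2))))
      = (√(2 * Real.pi * v))⁻¹ *
          Real.exp (-(μ - ν) ^ 2 / v + -(x - ν) ^ 2 / (2 * (v / 2))) := by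
        rw [hsqrt, Real.exp_add]
        ring
    _ ≤ (√(2 * Real.pi * v))⁻¹ * Real.exp (-(x - μ) ^ 2 / (2 * v)) := by gcongr

lemma smul_gaussianReal_half_var_le (μ ν : ℝ) {v : ℝ≥0} (hv : v ≠ 0) :
    ENNReal.ofReal (Real.exp (-(μ - ν) ^ 2 / v) / √2) • gaussianReal ν (v / 2) ≤
      gaussianReal μ v := by
  rw [gaussianReal_of_var_ne_zero μ hv, gaussianReal_of_var_ne_zero ν (div_ne_zero hv two_ne_zero),
    ← withDensity_smul _ (measurable_gaussianPDF ν (v / 2))]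
  refine withDensity_mono (ae_of_all _ fun x => ?_)
  rw [Pi.smul_apply, smul_eq_mul, gaussianPDF, gaussianPDF, ← ENNReal.ofReal_mul (by positivity)]
  exact ENNReal.ofReal_le_ofReal (mul_gaussianPDFReal_half_var_le μ ν v x)

lemma tvDist_gaussianReal_le (μ ν : ℝ) {v : ℝ≥0} (hv : v ≠ 0) :
    tvDist (gaussianReal μ v) (gaussianReal ν v) ≤
      1 - Real.exp (-(μ - ν) ^ 2 / (4 * v)) / √2 := by
  set c := Real.exp (-(μ - ν) ^ 2 / (4 * v)) / √2
  set m := (μ + ν) / 2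
  set R := ENNReal.ofReal c • gaussianReal m (v / 2)
  have hμm : -(μ - m) ^ 2 / v = -(μ - ν) ^ 2 / (4 * v) := by ring
  have hνm : -(ν - m) ^ 2 / v = -(μ - ν) ^ 2 / (4 * v) := by ring
  have hμ : R ≤ gaussianReal μ v := by
    simpa only [hμm] using smul_gaussianReal_half_var_le μ m hv
  have hν : R ≤ gaussianReal ν v := by
    simpa only [hνm] using smul_gaussianReal_half_var_le ν m hv
  have hmass : R.real Set.univ = c := by
    rw [measureReal_ennreal_smul_apply, probReal_univ, mul_one,
      ENNReal.toReal_ofReal (by positivity)]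
  exact hmass ▸ tvDist_le_one_sub_of_le hμ hν

/-- Lemma 1.7 of the paper: the information-theoretic lower bound for robust Gaussian mean
estimation. For every `ε ∈ [1/4, 1/2)` there are two unit-variance Gaussians with total
variation distance at most `2ε` whose means are at least `√(log(1/(1−2ε)) − log 2)` apart. -/
theorem lower_bound_gaussian (ε : ℝ) (hε0 : 1 / 4 ≤ ε) (hε : ε < 1 / 2) :
    ∃ μ1 μ2 : ℝ,
      tvDist (gaussianReal μ1 1) (gaussianReal μ2 1) ≤ 2 * ε ∧
      Real.sqrt (Real.log (1 / (1 - 2 * ε)) - Real.log 2) ≤ |μ1 - μ2| := by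
  have hpos : 0 < 1 - 2 * ε := by linarith
  set L := Real.log (1 / (1 - 2 * ε)) - Real.log 2 with hL
  have hexp : Real.exp (-L) = 2 * (1 - 2 * ε) := by
    rw [hL, neg_sub, Real.exp_sub, Real.exp_log two_pos, Real.exp_log (by positivity),
      div_div_eq_mul_div, div_one]
  have hL_nonneg : 0 ≤ L := by
    rw [← neg_nonpos, ← Real.exp_le_one_iff, hexp]
    linarith
  refine ⟨√L, 0, ?_, by rw [sub_zero]; exact le_abs_self _⟩
  calc tvDist (gaussianReal (√L) 1) (gaussianReal 0 1)
      ≤ 1 - Real.exp (-(√L - 0) ^ 2 / (4 * (1 : ℝ≥0))) / √2 :=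
        tvDist_gaussianReal_le (√L) 0 one_ne_zero
    _ = 1 - Real.exp (-L / 4) / √2 := by
        rw [sub_zero, Real.sq_sqrt hL_nonneg, NNReal.coe_one, mul_one]
    _ ≤ 1 - Real.exp (-L) / 2 := by
        gcongr
        · linarith
        · exact Real.sqrt_le_iff.mpr (by norm_num)
    _ = 2 * ε := by rw [hexp]; ring
end

section
/- For every ε ∈ (1/4, 1/2) there exist Borel probability distributions D1 and D2 on ℝ such that: (1) D1 = N(0,1); (2) d_TV(D1, D2) ≤ 2ε; (3) D2 has finite mean μ2 and variance at most 1 + 3·(1 − 2ε); (4) μ2 ≥ (1 − 2ε)^{−1/2}. -/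
/-!
Replace a fraction `w = 2ε` of the mass of `N(0,1)` by a point mass at distance `m / w`, where
`m = (1 - w) ^ (-1/2)`. This costs at most `w` in total variation and moves the mean by `m`. The
two components of the mixture contribute `1 - w` to the variance, and the distance between their
means contributes `w (1 - w) (m / w) ² = 1 / w`; the latter is at most `1 + 2 (1 - w)` exactly
when `w ∈ [1/2, 1]`. Of the Gaussian, only its mean and its variance matter.
-/

open MeasureTheory ProbabilityTheory

open unitInterval

lemma memLp_add_measure {α E : Type*} [MeasurableSpace α] [NormedAddCommGroup E] {p : ENNReal}
    {f : α → E} {μ ν : Measure α} (hμ : MemLp f p μ) (hν : MemLp f p ν) : MemLp f p (μ + ν) := by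
  have hf : AEStronglyMeasurable f (μ + ν) :=
    hμ.aestronglyMeasurable.add_measure hν.aestronglyMeasurable
  rcases eq_or_ne p 0 with rfl | p_ne_zero
  · exact memLp_zero_iff_aestronglyMeasurable.2 hf
  rcases eq_or_ne p ⊤ with rfl | p_ne_top
  · have bound : ∀ᵐ x ∂(μ + ν), ‖f x‖ₑ ≤ max (eLpNormEssSup f μ) (eLpNormEssSup f ν) :=
      ae_add_measure_iff.2
        ⟨(enorm_ae_le_eLpNormEssSup f μ).mono fun _ => le_max_of_le_left,
          (enorm_ae_le_eLpNormEssSup f ν).mono fun _ => le_max_of_le_right⟩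
    exact ⟨hf, (essSup_le_of_ae_le _ bound).trans_lt (max_lt hμ.2 hν.2)⟩
  · rw [← integrable_norm_rpow_iff hf p_ne_zero p_ne_top]
    exact (hμ.integrable_norm_rpow p_ne_zero p_ne_top).add_measure
      (hν.integrable_norm_rpow p_ne_zero p_ne_top)

lemma memLp_dirac {α E : Type*} [MeasurableSpace α] [MeasurableSingletonClass α]
    [NormedAddCommGroup E] (f : α → E) (p : ENNReal) (a : α) : MemLp f p (Measure.dirac a) :=
  (memLp_congr_ae (ae_eq_dirac f)).2 (memLp_const (f a))

section Mixture

variable {α : Type*} [MeasurableSpace α]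

/-- The mixture `(1 - w) P + w Q` of two measures. The weight is an element of the unit interval,
so that mixtures of probability measures are probability measures without side conditions. -/
noncomputable def mixture (w : I) (P Q : Measure α) : Measure α :=
  toNNReal (σ w) • P + toNNReal w • Q

variable {w : I} {P Q : Measure α}

instance [IsProbabilityMeasure P] [IsProbabilityMeasure Q] :
    IsProbabilityMeasure (mixture w P Q) := by
  rw [mixture, add_comm]
  infer_instance

lemma measureReal_mixture [IsFiniteMeasure P] [IsFiniteMeasure Q] (s : Set α) :
    (mixture w P Q).real s = (1 - w) * P.real s + w * Q.real s := by
  rw [mixture, measureReal_add_apply, measureReal_nnreal_smul_apply, measureReal_nnreal_smul_apply,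
    coe_toNNReal, coe_toNNReal, coe_symm_eq]

lemma memLp_mixture {E : Type*} [NormedAddCommGroup E] {p : ENNReal} {f : α → E}
    (hP : MemLp f p P) (hQ : MemLp f p Q) : MemLp f p (mixture w P Q) :=
  memLp_add_measure (hP.smul_measure ENNReal.coe_ne_top) (hQ.smul_measure ENNReal.coe_ne_top)

lemma integral_mixture {E : Type*} [NormedAddCommGroup E] [NormedSpace ℝ E] {f : α → E}
    (hP : Integrable f P) (hQ : Integrable f Q) :
    ∫ x, f x ∂(mixture w P Q) = (1 - w : ℝ) • ∫ x, f x ∂P + (w : ℝ) • ∫ x, f x ∂Q := by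
  rw [mixture, integral_add_measure (hP.smul_measure_nnreal) (hQ.smul_measure_nnreal),
    integral_smul_nnreal_measure, integral_smul_nnreal_measure]
  rfl

lemma variance_mixture [IsProbabilityMeasure P] [IsProbabilityMeasure Q] {X : α → ℝ}
    (hP : MemLp X 2 P) (hQ : MemLp X 2 Q) :
    Var[X; mixture w P Q] =
      (1 - w) * Var[X; P] + w * Var[X; Q] + w * (1 - w) * (Q[X] - P[X]) ^ 2 := by
  have mean := integral_mixture (w := w) (hP.integrable one_le_two) (hQ.integrable one_le_two)
  have second_moment : (mixture w P Q)[X ^ 2] = (1 - w : ℝ) • P[X ^ 2] + (w : ℝ) • Q[X ^ 2] :=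
    integral_mixture hP.integrable_sq hQ.integrable_sq
  rw [variance_eq_sub (memLp_mixture hP hQ), variance_eq_sub hP, variance_eq_sub hQ, mean,
    second_moment]
  simp only [smul_eq_mul]
  ring

lemma tvDist_le_one_s12 [IsProbabilityMeasure P] [IsProbabilityMeasure Q] : tvDist P Q ≤ 1 :=
  Real.iSup_le (fun _ => abs_sub_le_of_nonneg_of_le measureReal_nonneg measureReal_le_one
    measureReal_nonneg measureReal_le_one) zero_le_one

lemma tvDist_mixture_right [IsFiniteMeasure P] [IsFiniteMeasure Q] :
    tvDist P (mixture w P Q) = w * tvDist P Q := by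
  rw [tvDist, tvDist, Real.mul_iSup_of_nonneg w.2.1]
  refine iSup_congr fun A => ?_
  have scaled : P.real A.1 - (mixture w P Q).real A.1 = w * (P.real A.1 - Q.real A.1) := by
    rw [measureReal_mixture]
    ring
  change |P.real A.1 - (mixture w P Q).real A.1| = w * |P.real A.1 - Q.real A.1|
  rw [scaled, abs_mul, abs_of_nonneg w.2.1]

lemma tvDist_mixture_right_le [IsProbabilityMeasure P] [IsProbabilityMeasure Q] :
    tvDist P (mixture w P Q) ≤ w :=
  tvDist_mixture_right.trans_le (mul_le_of_le_one_right w.2.1 tvDist_le_one_s12)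

end Mixture

section MeanShift

/-- The distribution obtained from `P` by moving a fraction `w` of its mass to a single point,
chosen so that the mean increases by `m` (if `w ≠ 0`). For `P = N(0,1)`, `w = 2ε` and
`m = (1 - 2ε) ^ (-1/2)` this is the distribution `D2` of the paper. -/
noncomputable def meanShift (w : I) (m : ℝ) (P : Measure ℝ) : Measure ℝ :=
  mixture w P (Measure.dirac ((∫ x, x ∂P) + m / w))

variable {w : I} {m : ℝ} {P : Measure ℝ}

lemma memLp_id_meanShift {p : ENNReal} (hP : MemLp id p P) : MemLp id p (meanShift w m P) :=
  memLp_mixture hP (memLp_dirac id p _)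

lemma integral_id_meanShift (hw : 0 < w) (hP : Integrable (fun x => x) P) :
    ∫ x, x ∂(meanShift w m P) = (∫ x, x ∂P) + m := by
  have w_ne_zero : (w : ℝ) ≠ 0 := (coe_pos.2 hw).ne'
  rw [meanShift, integral_mixture hP (integrable_dirac enorm_lt_top), integral_dirac]
  simp only [smul_eq_mul]
  field_simp
  ring

variable [IsProbabilityMeasure P]

instance : IsProbabilityMeasure (meanShift w m P) :=
  inferInstanceAs (IsProbabilityMeasure (mixture w P _))

lemma tvDist_meanShift_le : tvDist P (meanShift w m P) ≤ w :=
  tvDist_mixture_right_le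

lemma variance_id_meanShift (hw : 0 < w) (hP : MemLp id 2 P) :
    Var[id; meanShift w m P] = (1 - w) * (Var[id; P] + m ^ 2 / w) := by
  have w_ne_zero : (w : ℝ) ≠ 0 := (coe_pos.2 hw).ne'
  rw [meanShift, variance_mixture hP (memLp_dirac id 2 _), variance_dirac, integral_dirac]
  simp only [id_eq, add_sub_cancel_left]
  field_simp
  ring

end MeanShift

lemma inv_le_one_add_two_mul_one_sub {w : ℝ} (hw : 1 / 2 ≤ w) (hw1 : w ≤ 1) :
    w⁻¹ ≤ 1 + 2 * (1 - w) := by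
  rw [inv_le_iff_one_le_mul₀ (by linarith)]
  linarith [mul_nonneg (sub_nonneg.2 hw) (sub_nonneg.2 hw1)]

theorem lower_bound_gaussian_vs_bounded_covariance_large_eps_general
    (P : Measure ℝ) [IsProbabilityMeasure P] (hP : MemLp id 2 P) (hvar : Var[id; P] ≤ 1)
    (ε : ℝ) (hε0 : 1 / 4 ≤ ε) (hε : ε < 1 / 2) :
    ∃ D2 : Measure ℝ, IsProbabilityMeasure D2 ∧
      tvDist P D2 ≤ 2 * ε ∧
      Integrable (id : ℝ → ℝ) D2 ∧
      Integrable (fun x => (x - ∫ y, y ∂D2) ^ 2) D2 ∧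
      (∫ x, (x - ∫ y, y ∂D2) ^ 2 ∂D2) ≤ 1 + 3 * (1 - 2 * ε) ∧
      (∫ y, y ∂P) + (1 - 2 * ε) ^ (-(1 / 2 : ℝ)) ≤ ∫ y, y ∂D2 := by
  let w : I := ⟨2 * ε, by linarith, by linarith⟩
  let m : ℝ := (1 - 2 * ε) ^ (-(1 / 2 : ℝ))
  have w_pos : 0 < w := coe_pos.1 (show (0 : ℝ) < 2 * ε by linarith)
  have one_sub_pos : 0 < 1 - 2 * ε := by linarith
  have m_sq : (1 - 2 * ε) * m ^ 2 = 1 := by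
    rw [← Real.rpow_mul_natCast one_sub_pos.le]
    norm_num [Real.rpow_neg_one, one_sub_pos.ne']
  have shift_memLp : MemLp id 2 (meanShift w m P) := memLp_id_meanShift hP
  refine ⟨meanShift w m P, inferInstance, tvDist_meanShift_le, shift_memLp.integrable one_le_two,
    (shift_memLp.sub (memLp_const _)).integrable_sq, ?_,
    (integral_id_meanShift w_pos (hP.integrable one_le_two)).ge⟩
  calc ∫ x, (x - ∫ y, y ∂(meanShift w m P)) ^ 2 ∂(meanShift w m P)
      = Var[id; meanShift w m P] := (variance_eq_integral aemeasurable_id).symm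
    _ = (1 - 2 * ε) * (Var[id; P] + m ^ 2 / (2 * ε)) := variance_id_meanShift w_pos hP
    _ = (1 - 2 * ε) * Var[id; P] + (2 * ε)⁻¹ := by
      rw [mul_add, ← mul_div_assoc, m_sq, one_div]
    _ ≤ (1 - 2 * ε) * 1 + (1 + 2 * (1 - 2 * ε)) := by
      gcongr
      exact inv_le_one_add_two_mul_one_sub (by linarith) (by linarith)
    _ = 1 + 3 * (1 - 2 * ε) := by ring

/-- Lemma E.1 of the paper: for `ε ∈ (1/4, 1/2)` there is a distribution `D2` on `ℝ` with
`d_TV(N(0,1), D2) ≤ 2ε`, variance at most `1 + 3(1 − 2ε)`, and mean at least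
`(1 − 2ε)^(−1/2)`. -/
theorem lower_bound_gaussian_vs_bounded_covariance_large_eps
    (ε : ℝ) (hε0 : 1 / 4 < ε) (hε : ε < 1 / 2) :
    ∃ D2 : Measure ℝ, IsProbabilityMeasure D2 ∧
      tvDist (gaussianReal 0 1) D2 ≤ 2 * ε ∧
      Integrable (id : ℝ → ℝ) D2 ∧
      Integrable (fun x => (x - ∫ y, y ∂D2) ^ 2) D2 ∧
      (∫ x, (x - ∫ y, y ∂D2) ^ 2 ∂D2) ≤ 1 + 3 * (1 - 2 * ε) ∧
      (1 - 2 * ε) ^ (-(1 / 2 : ℝ)) ≤ ∫ y, y ∂D2 := by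
  simpa using lower_bound_gaussian_vs_bounded_covariance_large_eps_general (gaussianReal 0 1)
    (memLp_id_gaussianReal 2) (by simp) ε hε0.le hε
end
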